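/- Let P ⊂ ℝ³ be a centrally symmetric convex polytope with nonempty interior and let λ ∈ ℝ. Then A(P,z) = λ for every nonzero z ∈ ℝ³ if and only if P is a zonotope, i.e. there exist pairwise linearly independent nonzero vectors V = {v_1, …, v_n} spanning ℝ³ and a point x with P = x + ∑_{i=1}^n [0, v_i], such that 2·deg v = λ for every v ∈ V in the hypergraph ℱ. -/

import Mathlib

open scoped Pointwise BigOperators

noncomputable section

/-- Scalar product on `ℝ^d`. -/
def dotp {d : ℕ} (z x : Fin d → ℝ) : ℝ := ∑ i, z i * x i

/-- Number of vertices (extreme points) of a set. -/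
def nVert {d : ℕ} (S : Set (Fin d → ℝ)) : ℕ := (Set.extremePoints ℝ S).ncard

/-- `t⁻ = min {z·x : x ∈ P}`. -/
def tMin {d : ℕ} (P : Set (Fin d → ℝ)) (z : Fin d → ℝ) : ℝ := sInf (dotp z '' P)

/-- `t⁺ = max {z·x : x ∈ P}`. -/
def tMax {d : ℕ} (P : Set (Fin d → ℝ)) (z : Fin d → ℝ) : ℝ := sSup (dotp z '' P)

/-- `A(P,z)`: the average number of vertices of the sections `P ∩ {x : z·x = t}`
over `t ∈ [t⁻, t⁺]`. -/
def avgVert {d : ℕ} (P : Set (Fin d → ℝ)) (z : Fin d → ℝ) : ℝ :=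
  (tMax P z - tMin P z)⁻¹ *
    ∫ t in tMin P z..tMax P z, ((nVert (P ∩ {x | dotp z x = t}) : ℝ))

/-- A convex polytope: the convex hull of a finite point set. -/
def IsPolytope {d : ℕ} (P : Set (Fin d → ℝ)) : Prop :=
  ∃ s : Finset (Fin d → ℝ), P = convexHull ℝ (s : Set (Fin d → ℝ))

/-- The vectors are nonzero and pairwise linearly independent. -/
def PairwiseIndep {d n : ℕ} (a : Fin n → (Fin d → ℝ)) : Prop :=
  (∀ i, a i ≠ 0) ∧ ∀ i j, i ≠ j → ∀ c : ℝ, a j ≠ c • a i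

/-- A zonotope: a translate of a Minkowski sum of segments `[0, aᵢ]` with pairwise
linearly independent nonzero generators. -/
def IsZonotope {d : ℕ} (P : Set (Fin d → ℝ)) : Prop :=
  ∃ (n : ℕ) (a : Fin n → (Fin d → ℝ)) (x : Fin d → ℝ),
    PairwiseIndep a ∧ P = {x} + ∑ i, segment ℝ 0 (a i)

/-- Central symmetry: there is `c` with `2c - P = P`. -/
def CentSymm {d : ℕ} (P : Set (Fin d → ℝ)) : Prop :=
  ∃ c : Fin d → ℝ, (fun y => (2 : ℝ) • c - y) '' P = P

/-- An edge of the hypergraph `ℱ` on the generator set `V`: a subset `W ⊆ V` spanning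
a 2-dimensional subspace, maximal with this property. -/
def IsHEdge (V W : Finset (Fin 3 → ℝ)) : Prop :=
  W ⊆ V ∧ Module.finrank ℝ (Submodule.span ℝ (W : Set (Fin 3 → ℝ))) = 2 ∧
    ∀ v ∈ V, v ∉ W →
      Module.finrank ℝ (Submodule.span ℝ (insert v (W : Set (Fin 3 → ℝ)))) = 3

/-- The degree of `v` in the hypergraph `ℱ` on `V`: the number of edges containing `v`. -/
def degF (V : Finset (Fin 3 → ℝ)) (v : Fin 3 → ℝ) : ℕ :=
  {W : Finset (Fin 3 → ℝ) | IsHEdge V W ∧ v ∈ W}.ncard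

/-- The set of edges of the polytope `P` that are parallel to `v`: one-dimensional
exposed faces `[u,w]` of `P` with `w - u` a nonzero multiple of `v`. -/
def edgesParallel {d : ℕ} (P : Set (Fin d → ℝ)) (v : Fin d → ℝ) : Set (Set (Fin d → ℝ)) :=
  {e | ∃ u w : Fin d → ℝ, u ≠ w ∧ e = segment ℝ u w ∧
    (∃ y : Fin d → ℝ, y ≠ 0 ∧ e = {x ∈ P | ∀ p ∈ P, dotp y p ≤ dotp y x}) ∧
    ∃ c : ℝ, c ≠ 0 ∧ w - u = c • v}

/-!
For almost every level `t`, the vertices of the section of a polytope `P` by `z·x = t` are the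
points where this plane crosses an edge. Integrating over `t` therefore yields the sum of `|z·e|`
over the edge vectors `e` of `P`, and `A(P, z) = λ` for all `z` says that this sum is `λ` times the
width of `P` in direction `z`. Now the sum of `|z·e| / λ` is the width of the zonotope generated by
the vectors `e / λ`, and a centrally symmetric compact convex set is determined up to translation
by its widths, so `P` is a zonotope.

If `P` is a zonotope with generators `V`, then the vertex integral and the width are both
combinations of the functions `|z·v|`, `v ∈ V`, with the number of edges parallel to `v` and with
`1` as coefficients. These functions are linearly independent, so the average is constantly `λ` if
and only if every `v` has exactly `λ` parallel edges. An edge parallel to `v` is the face in a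
direction `z` orthogonal to `v` but to no other generator, and it is determined by the signs of
`z·u` for the other generators `u`. Projected along `v`, these lie on `deg v` lines of a plane, and
the signs change whenever `z`, turning in the plane orthogonal to `v`, passes a normal of one of
these lines: this gives `2 deg v` edges.
-/

open Set Filter Topology Module MeasureTheory

/-! ### Minimal faces and sections of convex sets -/

section Faces

variable {E : Type*} [AddCommGroup E] [Module ℝ E] {P : Set E} {x p q d : E}

theorem left_mem_extremePoints_segment (u w : E) : u ∈ (segment ℝ u w).extremePoints ℝ := by
  refine mem_extremePoints_iff_forall_segment.2 ⟨left_mem_segment ℝ u w, fun y hy z hz hu ↦ ?_⟩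
  obtain ⟨r, hr, rfl⟩ := mem_segment_iff_wbtw.1 hy
  obtain ⟨s, hs, rfl⟩ := mem_segment_iff_wbtw.1 hz
  rw [mem_segment_iff_wbtw] at hu
  rcases wbtw_or_wbtw_smul_vadd_of_nonneg u (w - u) hr.1 hs.1 with h | h
  · exact Or.inl (h.swap_left_iff.1 hu).symm
  · exact Or.inr (h.swap_left_iff.1 hu.symm).symm

theorem right_mem_extremePoints_segment (u w : E) : w ∈ (segment ℝ u w).extremePoints ℝ :=
  segment_symm ℝ w u ▸ left_mem_extremePoints_segment w u

theorem extremePoints_segment (u w : E) : (segment ℝ u w).extremePoints ℝ = {u, w} := by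
  refine Subset.antisymm ?_ (pair_subset_iff.2
    ⟨left_mem_extremePoints_segment u w, right_mem_extremePoints_segment u w⟩)
  rw [← convexHull_pair]
  exact extremePoints_convexHull_subset

theorem segment_eq_segment_iff {u w u' w' : E} :
    segment ℝ u w = segment ℝ u' w' ↔ u = u' ∧ w = w' ∨ u = w' ∧ w = u' := by
  refine ⟨fun h ↦ ?_, ?_⟩
  · rw [← pair_eq_pair_iff, ← extremePoints_segment, h, extremePoints_segment]
  · rintro (⟨rfl, rfl⟩ | ⟨rfl, rfl⟩)
    · rfl
    · exact segment_symm ℝ u w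

theorem linearMap_image_segment (f : Dual ℝ E) (u w : E) :
    f '' segment ℝ u w = segment ℝ (f u) (f w) :=
  image_segment ℝ f.toAffineMap u w

/-- The directions in which a convex set `P` can be left from its point `x` both ways: the
direction space of the smallest face of `P` that contains `x`. -/
def faceDirections (hP : Convex ℝ P) (hx : x ∈ P) : Submodule ℝ E where
  carrier := {d | ∀ᶠ t in 𝓝 (0 : ℝ), x + t • d ∈ P}
  zero_mem' := Eventually.of_forall fun t ↦ by rwa [smul_zero, add_zero]
  add_mem' {d e} hd he := by
    have double : Tendsto (fun t : ℝ ↦ 2 * t) (𝓝 0) (𝓝 0) :=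
      (continuous_const_mul 2).tendsto' 0 0 (mul_zero 2)
    filter_upwards [double.eventually hd, double.eventually he] with t hd he
    have hmid := hP.midpoint_mem hd he
    rw [midpoint_eq_smul_add, invOf_eq_inv] at hmid
    convert hmid using 1
    module
  smul_mem' c d hd := by
    have scale : Tendsto (fun t : ℝ ↦ t * c) (𝓝 0) (𝓝 0) :=
      (continuous_mul_const c).tendsto' 0 0 (zero_mul c)
    filter_upwards [scale.eventually hd] with t ht
    rwa [smul_smul]

theorem mem_faceDirections {hP : Convex ℝ P} {hx : x ∈ P} :
    d ∈ faceDirections hP hx ↔ ∀ᶠ t in 𝓝 (0 : ℝ), x + t • d ∈ P := Iff.rfl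

theorem sub_mem_faceDirections (hP : Convex ℝ P) (hx : x ∈ P) (hp : p ∈ P) (hq : q ∈ P)
    (hpq : x ∈ openSegment ℝ p q) : q - p ∈ faceDirections hP hx := by
  obtain ⟨a, b, ha, hb, hab, rfl⟩ := hpq
  rw [mem_faceDirections]
  filter_upwards [Ioo_mem_nhds (neg_lt_zero.2 hb) ha] with t ht
  convert hP hp hq (a := a - t) (b := b + t) (by linarith [ht.2]) (by linarith [ht.1])
    (by linarith) using 1
  module

theorem faceDirections_le (hP : Convex ℝ P) (hp : p ∈ P) (hq : q ∈ P) (hx : x ∈ P)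
    (hpq : x ∈ openSegment ℝ p q) : faceDirections hP hp ≤ faceDirections hP hx := by
  intro d hd
  obtain ⟨a, b, ha, hb, hab, rfl⟩ := hpq
  have scale : Tendsto (fun t : ℝ ↦ t / a) (𝓝 0) (𝓝 0) :=
    (continuous_id.div_const a).tendsto' 0 0 (zero_div a)
  rw [mem_faceDirections]
  filter_upwards [scale.eventually hd] with t ht
  convert hP ht hq ha.le hb.le hab using 1
  rw [smul_add, smul_smul, mul_div_cancel₀ t ha.ne']
  module

theorem exists_pos_of_mem_faceDirections (hP : Convex ℝ P) (hx : x ∈ P)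
    (hd : d ∈ faceDirections hP hx) : ∃ ε > (0 : ℝ), x + ε • d ∈ P ∧ x - ε • d ∈ P := by
  obtain ⟨ε, hε, hball⟩ := Metric.eventually_nhds_iff.1 (mem_faceDirections.1 hd)
  refine ⟨ε / 2, half_pos hε, hball ?_, ?_⟩
  · rw [Real.dist_0_eq_abs, abs_of_pos] <;> linarith
  · rw [sub_eq_add_neg, ← neg_smul]
    exact hball (by rw [Real.dist_0_eq_abs, abs_neg, abs_of_pos] <;> linarith)

/-- The smallest face of the convex set `P` containing `x`. -/
def minimalFace (hP : Convex ℝ P) (hx : x ∈ P) : Set E :=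
  {y ∈ P | y - x ∈ faceDirections hP hx}

theorem mem_minimalFace_self (hP : Convex ℝ P) (hx : x ∈ P) : x ∈ minimalFace hP hx :=
  ⟨hx, by rw [sub_self]; exact zero_mem _⟩

theorem convex_minimalFace (hP : Convex ℝ P) (hx : x ∈ P) : Convex ℝ (minimalFace hP hx) := by
  refine fun y hy z hz a b ha hb hab ↦ ⟨hP hy.1 hz.1 ha hb hab, ?_⟩
  convert add_mem ((faceDirections hP hx).smul_mem a hy.2)
    ((faceDirections hP hx).smul_mem b hz.2) using 1
  rw [eq_sub_of_add_eq hab]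
  module

theorem isExtreme_minimalFace (hP : Convex ℝ P) (hx : x ∈ P) :
    IsExtreme ℝ P (minimalFace hP hx) := by
  refine ⟨fun y hy ↦ hy.1, fun q₁ hq₁ q₂ hq₂ p hp hpq ↦ ⟨hq₁, ?_⟩⟩
  obtain ⟨ε, hε, -, hback⟩ := exists_pos_of_mem_faceDirections hP hx hp.2
  have hbetween : x ∈ openSegment ℝ p (x - ε • (p - x)) := by
    refine ⟨ε / (1 + ε), 1 / (1 + ε), by positivity, by positivity,
      by field_simp; ring, ?_⟩
    match_scalars <;> field_simp <;> ring
  have hdir : q₂ - q₁ ∈ faceDirections hP hx :=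
    faceDirections_le hP hp.1 hback hx hbetween
      (sub_mem_faceDirections hP hp.1 hq₁ hq₂ hpq)
  obtain ⟨a, b, -, -, hab, rfl⟩ := hpq
  convert sub_mem hp.2 ((faceDirections hP hx).smul_mem b hdir) using 1
  rw [eq_sub_of_add_eq hab]
  module

theorem mem_extremePoints_iff_faceDirections_eq_bot (hP : Convex ℝ P) (hx : x ∈ P) :
    x ∈ P.extremePoints ℝ ↔ faceDirections hP hx = ⊥ := by
  rw [Submodule.eq_bot_iff]
  constructor
  · intro hext d hd
    obtain ⟨ε, hε, hfwd, hback⟩ := exists_pos_of_mem_faceDirections hP hx hd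
    have hmid : x ∈ openSegment ℝ (x + ε • d) (x - ε • d) :=
      ⟨1 / 2, 1 / 2, by norm_num, by norm_num, by norm_num, by module⟩
    have := hext.2 hfwd hback hmid
    exact (smul_eq_zero.1 (add_eq_left.1 this)).resolve_left hε.ne'
  · refine fun hbot ↦ mem_extremePoints_iff_left.2 ⟨hx, fun p hp q hq hpq ↦ ?_⟩
    have := sub_eq_zero.1 (hbot _ (sub_mem_faceDirections hP hx hp hq hpq))
    subst this
    rwa [openSegment_same, mem_singleton_iff, eq_comm] at hpq

theorem faceDirections_section (hP : Convex ℝ P) (f : Dual ℝ E) {t : ℝ}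
    (hPt : Convex ℝ (P ∩ {y | f y = t})) (hx : x ∈ P ∩ {y | f y = t}) :
    faceDirections hPt hx = faceDirections hP hx.1 ⊓ LinearMap.ker f := by
  ext d
  have hker : (∀ᶠ s in 𝓝 (0 : ℝ), f (x + s • d) = t) ↔ f d = 0 := by
    have hfx : f x = t := hx.2
    simp only [map_add, map_smul, smul_eq_mul, hfx, add_eq_left, mul_eq_zero]
    refine ⟨fun h ↦ ?_, fun h ↦ Eventually.of_forall fun _ ↦ Or.inr h⟩
    obtain ⟨s, hs, hs0⟩ := ((h.filter_mono nhdsWithin_le_nhds).and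
      (self_mem_nhdsWithin : {0}ᶜ ∈ 𝓝[≠] (0 : ℝ))).exists
    exact hs.resolve_left hs0
  rw [Submodule.mem_inf, LinearMap.mem_ker, mem_faceDirections, mem_faceDirections, ← hker,
    ← eventually_and]
  rfl

end Faces

section CompactConvex

variable {E : Type*} [NormedAddCommGroup E] [NormedSpace ℝ E] [FiniteDimensional ℝ E]
  {P F : Set E} {x : E}

theorem isCompact_minimalFace (hP : Convex ℝ P) (hcpt : IsCompact P) (hx : x ∈ P) :
    IsCompact (minimalFace hP hx) :=
  hcpt.inter_right ((Submodule.closed_of_finiteDimensional (faceDirections hP hx)).preimage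
    (continuous_id.sub continuous_const))

theorem exists_eq_segment_of_injOn (hF : Convex ℝ F) (hcpt : IsCompact F) (hne : F.Nonempty)
    (f : Dual ℝ E) (hinj : InjOn f F) : ∃ u w, F = segment ℝ u w ∧ f u ≤ f w := by
  have hf : ContinuousOn f F := f.continuous_of_finiteDimensional.continuousOn
  obtain ⟨u, hu, hmin⟩ := hcpt.exists_isMinOn hne hf
  obtain ⟨w, hw, hmax⟩ := hcpt.exists_isMaxOn hne hf
  have huw : f u ≤ f w := hmin hw
  refine ⟨u, w, Subset.antisymm (fun y hy ↦ ?_) (hF.segment_subset hu hw), huw⟩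
  have hfy : f y ∈ f '' segment ℝ u w := by
    rw [linearMap_image_segment, segment_eq_Icc huw]
    exact ⟨hmin hy, hmax hy⟩
  obtain ⟨y', hy', hyy'⟩ := hfy
  rwa [← hinj (hF.segment_subset hu hw hy') hy hyy']

theorem exists_isExtreme_segment_of_mem_extremePoints_section (hP : Convex ℝ P)
    (hcpt : IsCompact P) (f : Dual ℝ E) {t : ℝ} (ht : ∀ p ∈ P.extremePoints ℝ, f p ≠ t)
    (hx : x ∈ (P ∩ {y | f y = t}).extremePoints ℝ) :
    ∃ u w, IsExtreme ℝ P (segment ℝ u w) ∧ f u < t ∧ t < f w ∧ x ∈ segment ℝ u w := by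
  have hPt : Convex ℝ (P ∩ {y | f y = t}) := hP.inter (convex_hyperplane f.isLinear t)
  have hxt : f x = t := hx.1.2
  have hker : faceDirections hP hx.1.1 ⊓ LinearMap.ker f = ⊥ := by
    rwa [← faceDirections_section hP f hPt hx.1, ← mem_extremePoints_iff_faceDirections_eq_bot]
  have hinj : InjOn f (minimalFace hP hx.1.1) := fun y hy z hz hyz ↦ by
    have hsub : y - z ∈ faceDirections hP hx.1.1 := by
      simpa only [sub_sub_sub_cancel_right] using sub_mem hy.2 hz.2
    have hmem : y - z ∈ faceDirections hP hx.1.1 ⊓ LinearMap.ker f :=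
      ⟨hsub, by rw [SetLike.mem_coe, LinearMap.mem_ker, map_sub, hyz, sub_self]⟩
    rwa [hker, Submodule.mem_bot, sub_eq_zero] at hmem
  obtain ⟨u, w, hseg, huw⟩ := exists_eq_segment_of_injOn (convex_minimalFace hP hx.1.1)
    (isCompact_minimalFace hP hcpt hx.1.1) ⟨x, mem_minimalFace_self hP hx.1.1⟩ f hinj
  have hext : IsExtreme ℝ P (segment ℝ u w) := hseg ▸ isExtreme_minimalFace hP hx.1.1
  have hxseg : x ∈ segment ℝ u w := hseg ▸ mem_minimalFace_self hP hx.1.1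
  have hfx : f x ∈ Icc (f u) (f w) := by
    rw [← segment_eq_Icc huw, ← linearMap_image_segment]
    exact mem_image_of_mem f hxseg
  rw [hxt] at hfx
  have hu := ht u (hext.extremePoints_subset_extremePoints (left_mem_extremePoints_segment u w))
  have hw := ht w (hext.extremePoints_subset_extremePoints (right_mem_extremePoints_segment u w))
  exact ⟨u, w, hext, hfx.1.lt_of_ne hu, hfx.2.lt_of_ne hw.symm, hxseg⟩

end CompactConvex

/-! ### Counting the vertices of a section -/

section SegmentCrossing

variable {E : Type*} [AddCommGroup E] [Module ℝ E] {P : Set E} {f : Dual ℝ E} {t : ℝ}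
  {u w u' w' x : E}

theorem injOn_segment (huw : f u ≠ f w) : InjOn f (segment ℝ u w) := by
  intro y hy z hz hyz
  rw [segment_eq_image'] at hy hz
  obtain ⟨r, -, rfl⟩ := hy
  obtain ⟨s, -, rfl⟩ := hz
  simp only [map_add, map_smul, map_sub, smul_eq_mul, add_right_inj] at hyz
  rw [mul_right_cancel₀ (sub_ne_zero.2 huw.symm) hyz]

theorem exists_mem_segment_apply_eq (hu : f u < t) (hw : t < f w) :
    ∃ x ∈ segment ℝ u w, f x = t := by
  rw [← mem_image, linearMap_image_segment, segment_eq_Icc (hu.trans hw).le]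
  exact ⟨hu.le, hw.le⟩

theorem mem_extremePoints_section_of_mem_segment (hext : IsExtreme ℝ P (segment ℝ u w))
    (huw : f u ≠ f w) (hx : x ∈ segment ℝ u w) (hxt : f x = t) :
    x ∈ (P ∩ {y | f y = t}).extremePoints ℝ := by
  rw [mem_extremePoints_iff_left]
  refine ⟨⟨hext.subset hx, hxt⟩, fun y hy z hz hxyz ↦ ?_⟩
  exact injOn_segment huw (hext.left_mem_of_mem_openSegment hy.1 hz.1 hx hxyz) hx
    (hy.2.trans hxt.symm)

theorem segment_subset_of_isExtreme {F : Set E} (hF : IsExtreme ℝ P F) (hFc : Convex ℝ F)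
    (hu : u ∈ P) (hw : w ∈ P) (hx : x ∈ F) (hxu : x ≠ u) (hxw : x ≠ w)
    (hxuw : x ∈ segment ℝ u w) : segment ℝ u w ⊆ F := by
  have hopen := mem_openSegment_of_ne_left_right hxu.symm hxw.symm hxuw
  exact hFc.segment_subset (hF.left_mem_of_mem_openSegment hu hw hx hopen)
    (hF.right_mem_of_mem_openSegment hu hw hx hopen)

theorem eq_of_isExtreme_segment_of_crossing (hext : IsExtreme ℝ P (segment ℝ u w))
    (hext' : IsExtreme ℝ P (segment ℝ u' w')) (hu : f u < t) (hw : t < f w) (hu' : f u' < t)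
    (hw' : t < f w') (hxt : f x = t) (hx : x ∈ segment ℝ u w) (hx' : x ∈ segment ℝ u' w') :
    u = u' ∧ w = w' := by
  have hne {y : E} (hy : f y ≠ t) : x ≠ y := fun h ↦ hy (h ▸ hxt)
  have hseg : segment ℝ u w = segment ℝ u' w' := by
    apply Subset.antisymm
    · exact segment_subset_of_isExtreme hext' (convex_segment u' w')
        (hext.subset (left_mem_segment ℝ u w)) (hext.subset (right_mem_segment ℝ u w)) hx'
        (hne hu.ne) (hne hw.ne') hx
    · exact segment_subset_of_isExtreme hext (convex_segment u w)
        (hext'.subset (left_mem_segment ℝ u' w')) (hext'.subset (right_mem_segment ℝ u' w')) hx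
        (hne hu'.ne) (hne hw'.ne') hx'
  rcases segment_eq_segment_iff.1 hseg with h | ⟨rfl, rfl⟩
  · exact h
  · exact absurd hu hw'.not_gt

end SegmentCrossing

section WidthDefs

variable {E : Type*} [AddCommGroup E] [Module ℝ E]

/-- The width of `P` in the direction of the functional `f`. -/
def width (P : Set E) (f : Dual ℝ E) : ℝ := sSup (f '' P) - sInf (f '' P)

/-- The number of vertices of the sections of `P` by the level hyperplanes of `f`, integrated
over the levels that meet `P`. -/
def vertexIntegral (P : Set E) (f : Dual ℝ E) : ℝ :=
  ∫ t in sInf (f '' P)..sSup (f '' P), (((P ∩ {y | f y = t}).extremePoints ℝ).ncard : ℝ)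

end WidthDefs

section OrientedEdges

variable {E : Type*} [AddCommGroup E] [Module ℝ E] {s : Finset E}

open Classical in
/-- The edges of the polytope `convexHull ℝ s`, each of them listed once for either orientation,
as ordered pairs of endpoints. -/
def orientedEdges (s : Finset E) : Finset (E × E) :=
  {e ∈ s ×ˢ s | e.1 ≠ e.2 ∧ IsExtreme ℝ (convexHull ℝ (s : Set E)) (segment ℝ e.1 e.2)}

theorem mem_orientedEdges {e : E × E} : e ∈ orientedEdges s ↔
    e.1 ≠ e.2 ∧ IsExtreme ℝ (convexHull ℝ (s : Set E)) (segment ℝ e.1 e.2) := by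
  classical
  rw [orientedEdges, Finset.mem_filter, Finset.mem_product, and_iff_right_iff_imp]
  exact fun h ↦ ⟨extremePoints_convexHull_subset <| h.2.extremePoints_subset_extremePoints
      (left_mem_extremePoints_segment _ _),
    extremePoints_convexHull_subset <| h.2.extremePoints_subset_extremePoints
      (right_mem_extremePoints_segment _ _)⟩

theorem swap_mem_orientedEdges {e : E × E} : e.swap ∈ orientedEdges s ↔ e ∈ orientedEdges s := by
  rw [mem_orientedEdges, mem_orientedEdges, Prod.fst_swap, Prod.snd_swap, segment_symm, ne_comm]

theorem fst_mem_convexHull_of_mem_orientedEdges {e : E × E} (he : e ∈ orientedEdges s) :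
    e.1 ∈ convexHull ℝ (s : Set E) :=
  (mem_orientedEdges.1 he).2.subset (left_mem_segment ℝ _ _)

theorem snd_mem_convexHull_of_mem_orientedEdges {e : E × E} (he : e ∈ orientedEdges s) :
    e.2 ∈ convexHull ℝ (s : Set E) :=
  (mem_orientedEdges.1 he).2.subset (right_mem_segment ℝ _ _)

theorem sum_orientedEdges_swap {M : Type*} [AddCommMonoid M] (s : Finset E) (g : E × E → M) :
    ∑ e ∈ orientedEdges s, g e.swap = ∑ e ∈ orientedEdges s, g e :=
  Finset.sum_equiv (Equiv.prodComm E E) (fun _ ↦ swap_mem_orientedEdges.symm) fun _ _ ↦ rfl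

end OrientedEdges

section SectionVertices

variable {E : Type*} [NormedAddCommGroup E] [NormedSpace ℝ E] [FiniteDimensional ℝ E]
  {s : Finset E} {f : Dual ℝ E} {t : ℝ}

theorem exists_orientedEdge_of_mem_extremePoints_section {x : E} (ht : ∀ p ∈ s, f p ≠ t)
    (hx : x ∈ (convexHull ℝ (s : Set E) ∩ {y | f y = t}).extremePoints ℝ) :
    ∃ e ∈ orientedEdges s, (f e.1 < t ∧ t < f e.2) ∧ x ∈ segment ℝ e.1 e.2 := by
  obtain ⟨u, w, hext, hu, hw, hxuw⟩ := exists_isExtreme_segment_of_mem_extremePoints_section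
    (convex_convexHull ℝ _) (s.finite_toSet.isCompact_convexHull ℝ) f
    (fun p hp ↦ ht p (extremePoints_convexHull_subset hp)) hx
  have hne : u ≠ w := fun h ↦ (hu.trans hw).ne (congr_arg f h)
  exact ⟨(u, w), mem_orientedEdges.2 ⟨hne, hext⟩, ⟨hu, hw⟩, hxuw⟩

theorem ncard_extremePoints_section (ht : ∀ p ∈ s, f p ≠ t) :
    ((convexHull ℝ (s : Set E) ∩ {y | f y = t}).extremePoints ℝ).ncard =
      {e ∈ orientedEdges s | f e.1 < t ∧ t < f e.2}.card := by
  have hcross (e : E × E) (he : f e.1 < t ∧ t < f e.2) : ∃ x ∈ segment ℝ e.1 e.2, f x = t :=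
    exists_mem_segment_apply_eq he.1 he.2
  choose! crossing hseg hlevel using hcross
  have himage : (convexHull ℝ (s : Set E) ∩ {y | f y = t}).extremePoints ℝ =
      crossing '' ({e ∈ orientedEdges s | f e.1 < t ∧ t < f e.2} : Finset (E × E)) := by
    refine Subset.antisymm (fun x hx ↦ ?_) (image_subset_iff.2 fun e he ↦ ?_)
    · obtain ⟨e, he, het, hxe⟩ := exists_orientedEdge_of_mem_extremePoints_section ht hx
      exact ⟨e, Finset.mem_filter.2 ⟨he, het⟩, injOn_segment (het.1.trans het.2).ne (hseg e het) hxe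
        ((hlevel e het).trans hx.1.2.symm)⟩
    · obtain ⟨he, het⟩ := Finset.mem_filter.1 he
      exact mem_extremePoints_section_of_mem_segment (mem_orientedEdges.1 he).2
        (het.1.trans het.2).ne (hseg e het) (hlevel e het)
  have hinj : InjOn crossing
      ({e ∈ orientedEdges s | f e.1 < t ∧ t < f e.2} : Finset (E × E)) := by
    intro e he e' he' hee'
    obtain ⟨he, het⟩ := Finset.mem_filter.1 he
    obtain ⟨he', het'⟩ := Finset.mem_filter.1 he'
    exact Prod.ext_iff.2 <| eq_of_isExtreme_segment_of_crossing (mem_orientedEdges.1 he).2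
      (mem_orientedEdges.1 he').2 het.1 het.2 het'.1 het'.2 (hlevel e het) (hseg e het)
      (hee' ▸ hseg e' het')
  rw [himage, hinj.ncard_image, ncard_coe_finset]

theorem orientedEdges_nonempty {p q : E} (hp : p ∈ convexHull ℝ (s : Set E))
    (hq : q ∈ convexHull ℝ (s : Set E)) (hpq : f p < f q) : (orientedEdges s).Nonempty := by
  obtain ⟨t, ht, hts⟩ := ((Ioo_infinite hpq).sdiff (s.finite_toSet.image f)).nonempty
  obtain ⟨y, hy, hyt⟩ := exists_mem_segment_apply_eq ht.1 ht.2
  have hsec : IsCompact (convexHull ℝ (s : Set E) ∩ {y | f y = t}) :=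
    (s.finite_toSet.isCompact_convexHull ℝ).inter_right
      (isClosed_eq f.continuous_of_finiteDimensional continuous_const)
  obtain ⟨x, hx⟩ := hsec.extremePoints_nonempty
    ⟨y, (convex_convexHull ℝ _).segment_subset hp hq hy, hyt⟩
  obtain ⟨e, he, -⟩ := exists_orientedEdge_of_mem_extremePoints_section
    (fun p hp h ↦ hts ⟨p, hp, h⟩) hx
  exact ⟨e, he⟩

end SectionVertices

section Width

variable {E : Type*} [NormedAddCommGroup E] [NormedSpace ℝ E] {P : Set E} {p q : E}

theorem exists_apply_lt_apply_of_interior_nonempty (hP : (interior P).Nonempty) {f : Dual ℝ E}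
    (hf : f ≠ 0) : ∃ p ∈ P, ∃ q ∈ P, f p < f q := by
  obtain ⟨x, hx⟩ := hP
  obtain ⟨d, hd⟩ : ∃ d, 0 < f d := by
    obtain ⟨d, hd⟩ := DFunLike.ne_iff.1 hf
    rcases (show f d ≠ 0 from hd).lt_or_gt with h | h
    · exact ⟨-d, by simpa using h⟩
    · exact ⟨d, h⟩
  have hline : Tendsto (fun t : ℝ ↦ x + t • d) (𝓝[>] 0) (𝓝 x) :=
    ((by fun_prop : Continuous fun t : ℝ ↦ x + t • d).tendsto' 0 x (by simp)).mono_left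
      nhdsWithin_le_nhds
  obtain ⟨t, hmem, ht⟩ :=
    ((hline.eventually (mem_interior_iff_mem_nhds.1 hx)).and self_mem_nhdsWithin).exists
  refine ⟨x, interior_subset hx, x + t • d, hmem, ?_⟩
  rw [map_add, map_smul]
  exact lt_add_of_pos_right _ (mul_pos ht hd)

variable [FiniteDimensional ℝ E]

theorem isCompact_image_dual (hP : IsCompact P) (f : Dual ℝ E) : IsCompact (f '' P) :=
  hP.image f.continuous_of_finiteDimensional

theorem apply_sub_le_width (hP : IsCompact P) (f : Dual ℝ E) (hp : p ∈ P) (hq : q ∈ P) :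
    f q - f p ≤ width P f :=
  sub_le_sub (le_csSup (isCompact_image_dual hP f).bddAbove (mem_image_of_mem f hq))
    (csInf_le (isCompact_image_dual hP f).bddBelow (mem_image_of_mem f hp))

theorem width_pos (hP : IsCompact P) (hint : (interior P).Nonempty) {f : Dual ℝ E} (hf : f ≠ 0) :
    0 < width P f := by
  obtain ⟨p, hp, q, hq, hpq⟩ := exists_apply_lt_apply_of_interior_nonempty hint hf
  exact (sub_pos.2 hpq).trans_le (apply_sub_le_width hP f hp hq)

end Width

section VertexIntegral

theorem integral_indicator_Ioo {a b c d : ℝ} (hab : a ≤ b) (hac : a ≤ c) (hdb : d ≤ b) :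
    ∫ t in a..b, (Ioo c d).indicator 1 t = max (d - c) 0 := by
  rw [intervalIntegral.integral_of_le hab, integral_Ioc_eq_integral_Ioo,
    setIntegral_indicator measurableSet_Ioo, inter_eq_right.2 (Ioo_subset_Ioo hac hdb)]
  simp only [Pi.one_apply, setIntegral_const, smul_eq_mul, mul_one, Real.volume_real_Ioo]

variable {E : Type*} [NormedAddCommGroup E] [NormedSpace ℝ E] [FiniteDimensional ℝ E]

theorem vertexIntegral_convexHull_eq_sum_max (s : Finset E) (f : Dual ℝ E) :
    vertexIntegral (convexHull ℝ (s : Set E)) f =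
      ∑ e ∈ orientedEdges s, max (f e.2 - f e.1) 0 := by
  have hbdd := isCompact_image_dual (s.finite_toSet.isCompact_convexHull ℝ) f
  have hgeneric : ∀ᵐ t : ℝ, ∀ p ∈ s, f p ≠ t := by
    filter_upwards [(s.finite_toSet.image f).countable.ae_notMem volume] with t ht p hp hpt
    exact ht ⟨p, hp, hpt⟩
  calc vertexIntegral (convexHull ℝ (s : Set E)) f
      = ∫ t in _.._, ∑ e ∈ orientedEdges s, (Ioo (f e.1) (f e.2)).indicator (1 : ℝ → ℝ) t := by
        refine intervalIntegral.integral_congr_ae ?_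
        filter_upwards [hgeneric] with t ht _
        rw [ncard_extremePoints_section ht, Finset.card_filter, Nat.cast_sum]
        refine Finset.sum_congr rfl fun e _ ↦ ?_
        rw [indicator_apply, Nat.cast_ite, Nat.cast_one, Nat.cast_zero, Pi.one_apply]
        rfl
    _ = ∑ e ∈ orientedEdges s, ∫ t in _.._, (Ioo (f e.1) (f e.2)).indicator (1 : ℝ → ℝ) t := by
        refine intervalIntegral.integral_finsetSum fun e _ ↦ Integrable.intervalIntegrable ?_
        exact (integrable_indicator_iff measurableSet_Ioo).2 (integrableOn_const (by simp))
    _ = ∑ e ∈ orientedEdges s, max (f e.2 - f e.1) 0 := by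
        refine Finset.sum_congr rfl fun e he ↦ ?_
        have h₁ := mem_image_of_mem f (fst_mem_convexHull_of_mem_orientedEdges he)
        have h₂ := mem_image_of_mem f (snd_mem_convexHull_of_mem_orientedEdges he)
        exact integral_indicator_Ioo
          ((csInf_le hbdd.bddBelow h₁).trans (le_csSup hbdd.bddAbove h₁))
          (csInf_le hbdd.bddBelow h₁) (le_csSup hbdd.bddAbove h₂)

theorem vertexIntegral_convexHull (s : Finset E) (f : Dual ℝ E) :
    vertexIntegral (convexHull ℝ (s : Set E)) f =
      (∑ e ∈ orientedEdges s, |f (e.2 - e.1)|) / 2 := by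
  rw [eq_div_iff two_ne_zero, mul_two, vertexIntegral_convexHull_eq_sum_max]
  nth_rw 2 [← sum_orientedEdges_swap]
  rw [← Finset.sum_add_distrib]
  refine Finset.sum_congr rfl fun e _ ↦ ?_
  rw [Prod.fst_swap, Prod.snd_swap, map_sub]
  rcases le_total (f e.1) (f e.2) with h | h
  · rw [max_eq_left (sub_nonneg.2 h), max_eq_right (sub_nonpos.2 h), add_zero,
      abs_of_nonneg (sub_nonneg.2 h)]
  · rw [max_eq_right (sub_nonpos.2 h), max_eq_left (sub_nonneg.2 h), zero_add,
      abs_of_nonpos (sub_nonpos.2 h), neg_sub]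

end VertexIntegral

/-! ### Widths and zonotopes -/

section Symmetry

variable {E : Type*} [AddCommGroup E] [Module ℝ E] {P : Set E} {c p : E}

/-- The set `P` is invariant under the point reflection in `c`. -/
def SymmAbout (c : E) (P : Set E) : Prop := ∀ p ∈ P, (2 : ℝ) • c - p ∈ P

theorem width_eq_of_symmAbout (hP : SymmAbout c P) {f : Dual ℝ E} (hp : p ∈ P)
    (hmax : ∀ q ∈ P, f q ≤ f p) : width P f = 2 * (f p - f c) := by
  have hsup : IsGreatest (f '' P) (f p) :=
    ⟨mem_image_of_mem f hp, forall_mem_image.2 hmax⟩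
  have hinf : IsLeast (f '' P) (2 * f c - f p) := by
    refine ⟨⟨_, hP p hp, by simp⟩, forall_mem_image.2 fun q hq ↦ ?_⟩
    have := hmax _ (hP q hq)
    rw [map_sub, map_smul, smul_eq_mul] at this
    linarith
  rw [width, hsup.csSup_eq, hinf.csInf_eq]
  ring

end Symmetry

section SymmetryWidth

variable {E : Type*} [NormedAddCommGroup E] [NormedSpace ℝ E] [FiniteDimensional ℝ E]
  {P Q : Set E} {c : E}

theorem subset_of_width_le (hP : SymmAbout c P) (hPcpt : IsCompact P) (hQ : SymmAbout c Q)
    (hQcpt : IsCompact Q) (hQconv : Convex ℝ Q) (hQne : Q.Nonempty)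
    (hPQ : ∀ f, width P f ≤ width Q f) : P ⊆ Q := by
  by_contra hnot
  obtain ⟨p, hp, hpQ⟩ := not_subset.1 hnot
  obtain ⟨f, r, hfQ, hfp⟩ := geometric_hahn_banach_closed_point hQconv hQcpt.isClosed hpQ
  obtain ⟨q, hq, hmax⟩ := hQcpt.exists_isMaxOn hQne f.continuous.continuousOn
  have hwidthQ : width Q f = 2 * (f q - f c) := width_eq_of_symmAbout hQ hq hmax
  have hwidthP : f p - f ((2 : ℝ) • c - p) ≤ width P f :=
    apply_sub_le_width hPcpt (f : Dual ℝ E) (hP p hp) hp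
  rw [map_sub, map_smul, smul_eq_mul] at hwidthP
  linarith [hfQ q hq, hPQ f]

theorem eq_of_width_eq (hP : SymmAbout c P) (hPcpt : IsCompact P) (hPconv : Convex ℝ P)
    (hPne : P.Nonempty) (hQ : SymmAbout c Q) (hQcpt : IsCompact Q) (hQconv : Convex ℝ Q)
    (hQne : Q.Nonempty) (hPQ : ∀ f, width P f = width Q f) : P = Q :=
  (subset_of_width_le hP hPcpt hQ hQcpt hQconv hQne fun f ↦ (hPQ f).le).antisymm
    (subset_of_width_le hQ hQcpt hP hPcpt hPconv hPne fun f ↦ (hPQ f).ge)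

end SymmetryWidth

section Zonotope

variable {E : Type*} [AddCommGroup E] [Module ℝ E]

/-- The zonotope with generators `V`, translated by `x`. -/
def zonotope (x : E) (V : Finset E) : Set E := {x} + ∑ v ∈ V, segment ℝ 0 v

theorem mem_zonotope {x p : E} {V : Finset E} : p ∈ zonotope x V ↔
    ∃ a : E → ℝ, (∀ v ∈ V, a v ∈ Icc (0 : ℝ) 1) ∧ p = x + ∑ v ∈ V, a v • v := by
  have mem_seg {v q : E} : q ∈ segment ℝ 0 v ↔ ∃ r ∈ Icc (0 : ℝ) 1, r • v = q := by
    simp only [segment_eq_image', zero_add, sub_zero, mem_image]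
  rw [zonotope, singleton_add, mem_image]
  constructor
  · rintro ⟨q, hq, rfl⟩
    obtain ⟨g, hg, rfl⟩ := (mem_finsetSum _ _ _).1 hq
    choose! a ha hag using fun v (hv : v ∈ V) ↦ mem_seg.1 (hg hv)
    exact ⟨a, ha, congr_arg (x + ·) (Finset.sum_congr rfl fun v hv ↦ (hag v hv).symm)⟩
  · rintro ⟨a, ha, rfl⟩
    exact ⟨_, (mem_finsetSum _ _ _).2
      ⟨fun v ↦ a v • v, fun hv ↦ mem_seg.2 ⟨a _, ha _ hv, rfl⟩, rfl⟩, rfl⟩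

theorem mem_zonotope_self (x : E) (V : Finset E) : x ∈ zonotope x V :=
  mem_zonotope.2 ⟨0, fun _ _ ↦ left_mem_Icc.2 zero_le_one, by simp⟩

theorem add_mem_zonotope {V : Finset E} {v : E} (x : E) (hv : v ∈ V) : x + v ∈ zonotope x V := by
  classical
  refine mem_zonotope.2 ⟨fun u ↦ if u = v then 1 else 0, fun u _ ↦ ?_, ?_⟩
  · dsimp only
    split_ifs
    · exact right_mem_Icc.2 zero_le_one
    · exact left_mem_Icc.2 zero_le_one
  · simp only [ite_smul, one_smul, zero_smul, Finset.sum_ite_eq', if_pos hv]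

theorem convex_zonotope (x : E) (V : Finset E) : Convex ℝ (zonotope x V) :=
  (convex_singleton x).add ((convexAddSubmonoid ℝ E).sum_mem fun v _ ↦ convex_segment 0 v)

theorem zonotope_singleton (x v : E) : zonotope x {v} = segment ℝ x (x + v) := by
  rw [zonotope, Finset.sum_singleton, singleton_add, segment_translate_image, add_zero]

theorem symmAbout_zonotope (x : E) (V : Finset E) :
    SymmAbout (x + (2⁻¹ : ℝ) • ∑ v ∈ V, v) (zonotope x V) := by
  intro p hp
  obtain ⟨a, ha, rfl⟩ := mem_zonotope.1 hp
  refine mem_zonotope.2 ⟨fun v ↦ 1 - a v, fun v hv ↦ ?_, ?_⟩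
  · exact ⟨sub_nonneg.2 (ha v hv).2, sub_le_self _ (ha v hv).1⟩
  · simp only [sub_smul, one_smul, Finset.sum_sub_distrib]
    module

/-- The point of `zonotope x V` at which a functional `f` without zeros on `V` is maximal. -/
def signVertex (x : E) (V : Finset E) (f : Dual ℝ E) : E := x + ∑ v ∈ V with 0 < f v, v

theorem add_sum_smul_eq_signVertex_add {x : E} {V : Finset E} {f : Dual ℝ E} {a : E → ℝ}
    (hpos : ∀ v ∈ V, 0 < f v → a v = 1) (hneg : ∀ v ∈ V, f v < 0 → a v = 0) :
    x + ∑ v ∈ V, a v • v = signVertex x V f + ∑ v ∈ V with f v = 0, a v • v := by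
  rw [signVertex, add_assoc, Finset.sum_filter, Finset.sum_filter, ← Finset.sum_add_distrib]
  refine congr_arg (x + ·) (Finset.sum_congr rfl fun v hv ↦ ?_)
  rcases lt_trichotomy (f v) 0 with h | h | h
  · rw [hneg v hv h, if_neg h.not_gt, if_neg h.ne, zero_smul, zero_add]
  · rw [if_neg h.not_gt, if_pos h, zero_add]
  · rw [hpos v hv h, if_pos h, if_neg h.ne', one_smul, add_zero]

theorem apply_signVertex (x : E) (V : Finset E) (f : Dual ℝ E) :
    f (signVertex x V f) = f x + ∑ v ∈ V, max (f v) 0 := by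
  rw [signVertex, map_add, map_sum, Finset.sum_filter]
  refine congr_arg (f x + ·) (Finset.sum_congr rfl fun v _ ↦ ?_)
  split_ifs with h
  · exact (max_eq_left h.le).symm
  · exact (max_eq_right (not_lt.1 h)).symm

theorem zonotope_signVertex_subset (x : E) (V : Finset E) (f : Dual ℝ E) :
    zonotope (signVertex x V f) {v ∈ V | f v = 0} ⊆ zonotope x V := by
  classical
  intro p hp
  obtain ⟨b, hb, rfl⟩ := mem_zonotope.1 hp
  have hsum := add_sum_smul_eq_signVertex_add (x := x) (V := V) (f := f)
    (a := fun v ↦ if 0 < f v then 1 else if f v < 0 then 0 else b v)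
    (fun v _ h ↦ if_pos h) (fun v _ h ↦ by rw [if_neg h.not_gt, if_pos h])
  refine mem_zonotope.2 ⟨_, fun v hv ↦ ?_, Eq.trans ?_ hsum.symm⟩
  · split_ifs with h₁ h₂
    · exact right_mem_Icc.2 zero_le_one
    · exact left_mem_Icc.2 zero_le_one
    · exact hb v (Finset.mem_filter.2 ⟨hv, (not_lt.1 h₁).antisymm (not_lt.1 h₂)⟩)
  · refine congr_arg (signVertex x V f + ·) (Finset.sum_congr rfl fun v hv ↦ ?_)
    have h := (Finset.mem_filter.1 hv).2
    rw [if_neg h.not_gt, if_neg h.not_lt]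

theorem mul_le_max_zero {a r : ℝ} (ha : a ∈ Icc (0 : ℝ) 1) : a * r ≤ max r 0 := by
  rcases le_total r 0 with h | h
  · exact (mul_nonpos_of_nonneg_of_nonpos ha.1 h).trans (le_max_right r 0)
  · exact (mul_le_of_le_one_left h ha.2).trans (le_max_left r 0)

theorem apply_le_apply_signVertex {x p : E} {V : Finset E} (f : Dual ℝ E) (hp : p ∈ zonotope x V) :
    f p ≤ f (signVertex x V f) := by
  obtain ⟨a, ha, rfl⟩ := mem_zonotope.1 hp
  simp only [apply_signVertex, map_add, map_sum, map_smul, smul_eq_mul]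
  gcongr with v hv
  exact mul_le_max_zero (ha v hv)

theorem mem_zonotope_signVertex {x p : E} {V : Finset E} {f : Dual ℝ E} (hp : p ∈ zonotope x V)
    (hmax : f (signVertex x V f) ≤ f p) :
    p ∈ zonotope (signVertex x V f) {v ∈ V | f v = 0} := by
  obtain ⟨a, ha, rfl⟩ := mem_zonotope.1 hp
  simp only [apply_signVertex, map_add, map_sum, map_smul, smul_eq_mul,
    add_le_add_iff_left] at hmax
  have hle : ∀ v ∈ V, a v * f v ≤ max (f v) 0 := fun v hv ↦ mul_le_max_zero (ha v hv)
  have heq := (Finset.sum_eq_sum_iff_of_le hle).1 ((Finset.sum_le_sum hle).antisymm hmax)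
  refine mem_zonotope.2 ⟨a, fun v hv ↦ ha v (Finset.mem_filter.1 hv).1,
    add_sum_smul_eq_signVertex_add (fun v hv h ↦ ?_) fun v hv h ↦ ?_⟩
  · have := heq v hv
    rwa [max_eq_left h.le, mul_eq_right₀ h.ne'] at this
  · have := heq v hv
    rw [max_eq_right h.le] at this
    exact (mul_eq_zero.1 this).resolve_right h.ne

theorem setOf_isMax_zonotope (x : E) (V : Finset E) (f : Dual ℝ E) :
    {p ∈ zonotope x V | ∀ q ∈ zonotope x V, f q ≤ f p} =
      zonotope (signVertex x V f) {v ∈ V | f v = 0} := by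
  ext p
  refine ⟨fun ⟨hp, hmax⟩ ↦ mem_zonotope_signVertex hp (hmax _ ?_), fun hp ↦
    ⟨zonotope_signVertex_subset x V f hp, fun q hq ↦ (apply_le_apply_signVertex f hq).trans ?_⟩⟩
  · exact zonotope_signVertex_subset x V f (mem_zonotope_self _ _)
  · obtain ⟨b, -, rfl⟩ := mem_zonotope.1 hp
    rw [map_add, map_sum, Finset.sum_eq_zero fun v hv ↦ ?_, add_zero]
    rw [map_smul, (Finset.mem_filter.1 hv).2, smul_zero]

theorem width_zonotope (x : E) (V : Finset E) (f : Dual ℝ E) :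
    width (zonotope x V) f = ∑ v ∈ V, |f v| := by
  have hmem := zonotope_signVertex_subset x V f (mem_zonotope_self _ _)
  rw [width_eq_of_symmAbout (symmAbout_zonotope x V) hmem
    fun q hq ↦ apply_le_apply_signVertex f hq, apply_signVertex, map_add, map_smul, map_sum,
    smul_eq_mul, add_sub_add_left_eq_sub, mul_sub, mul_inv_cancel_left₀ two_ne_zero,
    Finset.mul_sum, ← Finset.sum_sub_distrib]
  refine Finset.sum_congr rfl fun v _ ↦ ?_
  rcases le_total (f v) 0 with h | h
  · rw [max_eq_right h, abs_of_nonpos h]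
    ring
  · rw [max_eq_left h, abs_of_nonneg h]
    ring

end Zonotope

section ZonotopeTopology

variable {E : Type*} [NormedAddCommGroup E] [NormedSpace ℝ E]

theorem isCompact_zonotope (x : E) (V : Finset E) : IsCompact (zonotope x V) := by
  refine isCompact_singleton.add (Finset.sum_induction _ IsCompact (fun _ _ ↦ IsCompact.add)
    isCompact_singleton fun v _ ↦ ?_)
  rw [segment_eq_image']
  exact isCompact_Icc.image (by fun_prop)

theorem isExtreme_zonotope_signVertex [FiniteDimensional ℝ E] (x : E) (V : Finset E)
    (f : Dual ℝ E) :
    IsExtreme ℝ (zonotope x V) (zonotope (signVertex x V f) {v ∈ V | f v = 0}) := by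
  have hexp : IsExposed ℝ (zonotope x V) (zonotope (signVertex x V f) {v ∈ V | f v = 0}) :=
    fun _ ↦ ⟨f.toContinuousLinearMap, (setOf_isMax_zonotope x V f).symm⟩
  exact hexp.isExtreme

theorem exists_eq_zonotope_of_width_eq [FiniteDimensional ℝ E] {P : Set E} {c : E}
    (hP : SymmAbout c P) (hcpt : IsCompact P) (hconv : Convex ℝ P) (hne : P.Nonempty)
    {V : Finset E} (hV : ∀ f, width P f = ∑ v ∈ V, |f v|) : ∃ x, P = zonotope x V := by
  have hsymm := symmAbout_zonotope (c - (2⁻¹ : ℝ) • ∑ v ∈ V, v) V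
  rw [sub_add_cancel] at hsymm
  exact ⟨_, eq_of_width_eq hP hcpt hconv hne hsymm (isCompact_zonotope _ V) (convex_zonotope _ V)
    ⟨_, mem_zonotope_self _ V⟩ fun f ↦ (hV f).trans (width_zonotope _ V f).symm⟩

end ZonotopeTopology

/-! ### Edges of zonotopes -/

section ExposedFaces

variable {E : Type*} [NormedAddCommGroup E] [NormedSpace ℝ E] {F : Set E} {x y : E}

theorem exists_mem_openSegment_of_mem_intrinsicInterior (hx : x ∈ intrinsicInterior ℝ F)
    (hy : y ∈ affineSpan ℝ F) : ∃ z ∈ F, x ∈ openSegment ℝ y z := by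
  obtain ⟨x', hx', rfl⟩ := mem_intrinsicInterior.1 hx
  let line (t : ℝ) : affineSpan ℝ F :=
    ⟨AffineMap.lineMap x'.1 y t, AffineMap.lineMap_mem t x'.2 hy⟩
  have hline : Tendsto line (𝓝[<] 0) (𝓝 x') := by
    refine Tendsto.mono_left (Continuous.tendsto' ?_ 0 x' ?_) nhdsWithin_le_nhds
    · exact AffineMap.lineMap_continuous.subtype_mk _
    · exact Subtype.ext (AffineMap.lineMap_apply_zero x'.1 y)
  have hF : ∀ᶠ t in 𝓝[<] 0, (line t : E) ∈ F := hline (mem_interior_iff_mem_nhds.1 hx')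
  obtain ⟨t, hmem, ht⟩ := (hF.and self_mem_nhdsWithin).exists
  have ht : t < 0 := ht
  have h1 : 0 < 1 - t := by linarith
  refine ⟨_, hmem, -t / (1 - t), 1 / (1 - t), div_pos (neg_pos.2 ht) h1, by positivity,
    by field_simp; ring, ?_⟩
  simp only [line, AffineMap.lineMap_apply_module]
  match_scalars <;> field_simp
  ring

theorem apply_eq_of_bddBelow_affineSubspace {A : AffineSubspace ℝ E} {f : Dual ℝ E} {r : ℝ}
    (hA : ∀ p ∈ A, r ≤ f p) (hx : x ∈ A) (hy : y ∈ A) : f x = f y := by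
  by_contra hne
  have := hA _ (AffineMap.lineMap_mem ((r - 1 - f x) / (f y - f x)) hx hy)
  rw [AffineMap.lineMap_apply_module', map_add, map_smul, map_sub, smul_eq_mul,
    div_mul_cancel₀ _ (sub_ne_zero.2 (Ne.symm hne))] at this
  linarith

theorem disjoint_convexHull_sdiff_affineSpan [FiniteDimensional ℝ E] {A P : Set E}
    (hP : Convex ℝ P) (hF : IsExtreme ℝ P F) (hFc : Convex ℝ F) (hFne : F.Nonempty)
    (hA : A ⊆ P) : Disjoint (convexHull ℝ (A \ F)) (affineSpan ℝ F : Set E) := by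
  refine disjoint_left.2 fun y hy hyF ↦ ?_
  obtain ⟨hyP, hyF'⟩ : y ∈ P \ F :=
    convexHull_min (sdiff_subset_sdiff_left hA) (hF.convex_sdiff hP) hy
  obtain ⟨x, hx⟩ := hFne.intrinsicInterior hFc
  obtain ⟨z, hz, hxyz⟩ := exists_mem_openSegment_of_mem_intrinsicInterior hx hyF
  exact hyF' (hF.left_mem_of_mem_openSegment hyP (hF.subset hz) (intrinsicInterior_subset hx) hxyz)

theorem exists_strict_separation_of_isExtreme_convexHull [FiniteDimensional ℝ E] {s : Finset E}
    (hF : IsExtreme ℝ (convexHull ℝ (s : Set E)) F) (hFc : Convex ℝ F) (hFne : F.Nonempty) :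
    ∃ (f : E →L[ℝ] ℝ) (r : ℝ), (∀ p ∈ F, f p = r) ∧ ∀ p ∈ (s : Set E) \ F, f p < r := by
  obtain ⟨f, r, r', hfs, hrr', hfF⟩ := geometric_hahn_banach_compact_closed
    (convex_convexHull ℝ _) (s.finite_toSet.sdiff.isCompact_convexHull ℝ)
    (affineSpan ℝ F).convex (AffineSubspace.closed_of_finiteDimensional _)
    (disjoint_convexHull_sdiff_affineSpan (convex_convexHull ℝ _) hF hFc hFne
      (subset_convexHull ℝ (s : Set E)))
  obtain ⟨y, hy⟩ := hFne
  refine ⟨f, f y, fun p hp ↦ ?_, fun p hp ↦ ?_⟩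
  · exact apply_eq_of_bddBelow_affineSubspace (f := (f : Dual ℝ E)) (fun q hq ↦ (hfF q hq).le)
      (subset_affineSpan ℝ F hp) (subset_affineSpan ℝ F hy)
  · exact (hfs p (subset_convexHull ℝ _ hp)).trans
      (hrr'.trans (hfF y (subset_affineSpan ℝ F hy)))

theorem isExposed_of_isExtreme_convexHull [FiniteDimensional ℝ E] {s : Finset E}
    (hF : IsExtreme ℝ (convexHull ℝ (s : Set E)) F) (hFc : Convex ℝ F) :
    IsExposed ℝ (convexHull ℝ (s : Set E)) F := by
  intro hFne
  obtain ⟨f, r, hfF, hfs⟩ := exists_strict_separation_of_isExtreme_convexHull hF hFc hFne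
  have hle : ∀ p ∈ convexHull ℝ (s : Set E), f p ≤ r := by
    refine convexHull_min (fun p hp ↦ ?_) (convex_halfSpace_le f.isLinear r)
    by_cases hpF : p ∈ F
    · exact (hfF p hpF).le
    · exact (hfs p ⟨hp, hpF⟩).le
  let G := f.toExposed (convexHull ℝ (s : Set E))
  have hG : IsExposed ℝ (convexHull ℝ (s : Set E)) G := ContinuousLinearMap.toExposed.isExposed
  have hext : G.extremePoints ℝ ⊆ s := fun p hp ↦
    extremePoints_convexHull_subset (hG.isExtreme.extremePoints_subset_extremePoints hp)
  refine ⟨f, Subset.antisymm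
    (fun p hp ↦ ⟨hF.subset hp, fun q hq ↦ (hle q hq).trans (hfF p hp).ge⟩) ?_⟩
  change G ⊆ F
  rw [← closure_convexHull_extremePoints (hG.isCompact (s.finite_toSet.isCompact_convexHull ℝ))
    (hG.convex (convex_convexHull ℝ _)),
    ((s.finite_toSet.subset hext).isClosed_convexHull ℝ).closure_eq]
  refine convexHull_min (fun p hp ↦ ?_) hFc
  by_contra hpF
  obtain ⟨y, hy⟩ := hFne
  exact (hfs p ⟨hext hp, hpF⟩).not_ge ((hfF y hy).ge.trans (hp.1.2 y (hF.subset hy)))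

end ExposedFaces

section EdgePatterns

variable {E : Type*} [AddCommGroup E] [Module ℝ E] {V : Finset E} {u v v₀ : E} {c : ℝ}

/-- The vectors of `V` are nonzero and pairwise linearly independent. -/
def PairwiseNonParallel (V : Finset E) : Prop :=
  (∀ v ∈ V, v ≠ 0) ∧ ∀ u ∈ V, ∀ v ∈ V, u ≠ v → ∀ c : ℝ, v ≠ c • u

theorem PairwiseNonParallel.eq_of_smul (hV : PairwiseNonParallel V) (hu : u ∈ V) (hv : v ∈ V)
    (h : v = c • u) : u = v :=
  not_ne_iff.1 fun hne ↦ hV.2 u hu v hv hne c h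

theorem PairwiseNonParallel.neg_notMem (hV : PairwiseNonParallel V) (hv : v ∈ V) : -v ∉ V :=
  have := IsAddTorsionFree.of_isTorsionFree ℝ E
  fun hneg ↦ hV.1 v hv (self_eq_neg.1 (hV.eq_of_smul hv hneg (neg_one_smul ℝ v).symm))

theorem PairwiseNonParallel.mono {W : Finset E} (hV : PairwiseNonParallel V) (hW : W ⊆ V) :
    PairwiseNonParallel W :=
  ⟨fun v hv ↦ hV.1 v (hW hv), fun u hu v hv ↦ hV.2 u (hW hu) v (hW hv)⟩

theorem PairwiseNonParallel.eq_of_mem_span_singleton (hV : PairwiseNonParallel V) (hu : u ∈ V)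
    (hv : v ∈ V) {d : E} (hud : u ∈ ℝ ∙ d) (hvd : v ∈ ℝ ∙ d) : u = v := by
  obtain ⟨a, rfl⟩ := Submodule.mem_span_singleton.1 hud
  obtain ⟨b, rfl⟩ := Submodule.mem_span_singleton.1 hvd
  have ha : a ≠ 0 := fun h ↦ hV.1 _ hu (by rw [h, zero_smul])
  exact hV.eq_of_smul hu hv (c := b / a) (by rw [smul_smul, div_mul_cancel₀ b ha])

theorem sub_mem_span_of_mem_segment {w p q : E} (hp : p ∈ segment ℝ u w)
    (hq : q ∈ segment ℝ u w) : q - p ∈ ℝ ∙ (w - u) := by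
  rw [segment_eq_image'] at hp hq
  obtain ⟨a, -, rfl⟩ := hp
  obtain ⟨b, -, rfl⟩ := hq
  exact Submodule.mem_span_singleton.2 ⟨b - a, by module⟩

theorem exists_eq_singleton_of_zonotope_eq_segment {w x : E} (hV : PairwiseNonParallel V)
    (huw : u ≠ w) (h : zonotope x V = segment ℝ u w) : ∃ v, V = {v} := by
  have hspan : ∀ v ∈ V, v ∈ ℝ ∙ (w - u) := fun v hv ↦ by
    have := sub_mem_span_of_mem_segment (h.le (mem_zonotope_self x V))
      (h.le (add_mem_zonotope x hv))
    rwa [add_sub_cancel_left] at this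
  refine Finset.card_eq_one.1 ((Finset.card_le_one.2 fun v hv v' hv' ↦ ?_).antisymm
    (Finset.card_pos.2 (Finset.nonempty_iff_ne_empty.2 fun hempty ↦ huw ?_)))
  · exact hV.eq_of_mem_span_singleton hv hv' (hspan v hv) (hspan v' hv')
  · rw [hempty, zonotope, Finset.sum_empty, add_zero] at h
    exact (h.ge (left_mem_segment ℝ u w)).trans (h.ge (right_mem_segment ℝ u w)).symm

/-- The sets of vectors of `V` on the positive side of a hyperplane that meets `V` in `v₀` only.
They encode the edges of a zonotope with generators `V` that are translates of `[0, v₀]`. -/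
def edgePatterns (V : Finset E) (v₀ : E) : Set (Finset E) :=
  {T | ∃ f : Dual ℝ E, {v ∈ V | f v = 0} = ({v₀} : Finset E) ∧ T = {v ∈ V | 0 < f v}}

theorem injOn_sum_edgePatterns (V : Finset E) (v₀ : E) :
    InjOn (fun T : Finset E ↦ ∑ v ∈ T, v) (edgePatterns V v₀) := by
  classical
  rintro _ ⟨f, hf, rfl⟩ T' ⟨g, hg, hT'⟩ hsum
  have hsum : ∑ v ∈ V with 0 < f v, v = ∑ v ∈ T', v := hsum
  have hle : ∀ v ∈ V, (if v ∈ T' then f v else 0) ≤ max (f v) 0 := fun v _ ↦ by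
    split_ifs
    · exact le_max_left _ _
    · exact le_max_right _ _
  have heq : ∑ v ∈ V, (if v ∈ T' then f v else 0) = ∑ v ∈ V, max (f v) 0 := by
    have := congr_arg f hsum
    have hsign := apply_signVertex 0 V f
    rw [signVertex, zero_add, map_zero, zero_add] at hsign
    rw [← hsign, hsum, map_sum, ← Finset.sum_filter, hT', Finset.filter_mem_eq_inter,
      Finset.inter_eq_right.2 (Finset.filter_subset _ _)]
  ext v
  have hfv := Finset.ext_iff.1 hf v
  have hgv := Finset.ext_iff.1 hg v
  have hv := (Finset.sum_eq_sum_iff_of_le hle).1 heq v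
  simp only [hT', Finset.mem_filter, Finset.mem_singleton] at hfv hgv hv ⊢
  grind

end EdgePatterns

section ZonotopeEdges

variable {E : Type*} [NormedAddCommGroup E] [NormedSpace ℝ E] [FiniteDimensional ℝ E]
  {s V : Finset E} {x v₀ : E}

theorem exists_segment_eq_of_isExtreme_zonotope (hV : PairwiseNonParallel V)
    (hs : convexHull ℝ (s : Set E) = zonotope x V) {e : E × E} (he : e ∈ orientedEdges s) :
    ∃ (f : Dual ℝ E) (v₀ : E), {v ∈ V | f v = 0} = ({v₀} : Finset E) ∧
      segment ℝ e.1 e.2 = segment ℝ (signVertex x V f) (signVertex x V f + v₀) := by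
  obtain ⟨hne, hext⟩ := mem_orientedEdges.1 he
  obtain ⟨f, hf⟩ := isExposed_of_isExtreme_convexHull hext (convex_segment _ _)
    ⟨e.1, left_mem_segment ℝ e.1 e.2⟩
  have hface : zonotope (signVertex x V (f : Dual ℝ E)) {v ∈ V | f v = 0} =
      segment ℝ e.1 e.2 := by
    rw [hf, hs]
    exact (setOf_isMax_zonotope x V (f : Dual ℝ E)).symm
  obtain ⟨v₀, hv₀⟩ :=
    exists_eq_singleton_of_zonotope_eq_segment (hV.mono (Finset.filter_subset _ V)) hne hface
  exact ⟨f, v₀, hv₀, by rw [← hface, hv₀, zonotope_singleton]⟩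

theorem mk_signVertex_mem_orientedEdges (hs : convexHull ℝ (s : Set E) = zonotope x V)
    (hv₀ : v₀ ≠ 0) {f : Dual ℝ E} (hf : {v ∈ V | f v = 0} = ({v₀} : Finset E)) :
    (signVertex x V f, signVertex x V f + v₀) ∈ orientedEdges s := by
  refine mem_orientedEdges.2 ⟨(add_ne_left.2 hv₀).symm, ?_⟩
  have := isExtreme_zonotope_signVertex x V f
  rwa [hf, zonotope_singleton, ← hs] at this

theorem sub_mem_or_sub_mem_of_mem_orientedEdges (hV : PairwiseNonParallel V)
    (hs : convexHull ℝ (s : Set E) = zonotope x V) {e : E × E} (he : e ∈ orientedEdges s) :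
    e.2 - e.1 ∈ V ∨ e.1 - e.2 ∈ V := by
  obtain ⟨f, v₀, hf, hseg⟩ := exists_segment_eq_of_isExtreme_zonotope hV hs he
  have hv₀ : v₀ ∈ V := Finset.filter_subset _ _ (hf ▸ Finset.mem_singleton_self v₀)
  rcases segment_eq_segment_iff.1 hseg with ⟨h₁, h₂⟩ | ⟨h₁, h₂⟩
  · exact Or.inl (by rwa [h₁, h₂, add_sub_cancel_left])
  · exact Or.inr (by rwa [h₁, h₂, add_sub_cancel_left])

theorem card_filter_sub_eq_orientedEdges (hV : PairwiseNonParallel V)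
    (hs : convexHull ℝ (s : Set E) = zonotope x V) (hv₀ : v₀ ∈ V) [DecidableEq E] :
    ({e ∈ orientedEdges s | e.2 - e.1 = v₀} : Finset (E × E)).card =
      (edgePatterns V v₀).ncard := by
  let b (T : Finset E) : E := x + ∑ v ∈ T, v
  have hinj : InjOn (fun T ↦ (b T, b T + v₀)) (edgePatterns V v₀) := fun T hT T' hT' h ↦
    injOn_sum_edgePatterns V v₀ hT hT' (add_left_cancel (Prod.ext_iff.1 h).1)
  rw [← ncard_coe_finset, ← hinj.ncard_image]
  congr 1
  ext ⟨u, w⟩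
  simp only [Finset.coe_filter, mem_image, Set.mem_ofPred_eq, edgePatterns]
  constructor
  · rintro ⟨he, rfl⟩
    obtain ⟨f, v₁, hf, hseg⟩ := exists_segment_eq_of_isExtreme_zonotope hV hs he
    have hv₁ : v₁ ∈ V := Finset.filter_subset _ _ (hf ▸ Finset.mem_singleton_self v₁)
    rcases segment_eq_segment_iff.1 hseg with ⟨rfl, rfl⟩ | ⟨rfl, rfl⟩
    · rw [add_sub_cancel_left]
      exact ⟨_, ⟨f, hf, rfl⟩, rfl⟩
    · rw [sub_add_cancel_left] at hv₀
      exact absurd hv₀ (hV.neg_notMem hv₁)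
  · rintro ⟨_, ⟨f, hf, rfl⟩, h⟩
    obtain ⟨rfl, rfl⟩ := Prod.mk.inj h
    exact ⟨mk_signVertex_mem_orientedEdges hs (hV.1 _ hv₀) hf, add_sub_cancel_left _ _⟩

theorem sum_orientedEdges_abs_zonotope (hV : PairwiseNonParallel V)
    (hs : convexHull ℝ (s : Set E) = zonotope x V) (f : Dual ℝ E) :
    ∑ e ∈ orientedEdges s, |f (e.2 - e.1)| =
      2 * ∑ v ∈ V, ((edgePatterns V v).ncard : ℝ) * |f v| := by
  classical
  have hsplit : ∀ e ∈ orientedEdges s, |f (e.2 - e.1)| =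
      (if e.2 - e.1 ∈ V then |f (e.2 - e.1)| else 0) +
        if e.swap.2 - e.swap.1 ∈ V then |f (e.swap.2 - e.swap.1)| else 0 := fun e he ↦ by
    have hswap : |f (e.1 - e.2)| = |f (e.2 - e.1)| := by rw [← neg_sub, map_neg, abs_neg]
    rw [Prod.fst_swap, Prod.snd_swap, hswap]
    rcases sub_mem_or_sub_mem_of_mem_orientedEdges hV hs he with h | h
    · rw [if_pos h, if_neg (neg_sub e.2 e.1 ▸ hV.neg_notMem h), add_zero]
    · rw [if_pos h, if_neg (neg_sub e.1 e.2 ▸ hV.neg_notMem h), zero_add]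
  rw [Finset.sum_congr rfl hsplit, Finset.sum_add_distrib, sum_orientedEdges_swap s
    fun e ↦ if e.2 - e.1 ∈ V then |f (e.2 - e.1)| else 0, ← two_mul, ← Finset.sum_filter,
    ← Finset.sum_fiberwise_of_maps_to (fun e he ↦ (Finset.mem_filter.1 he).2)]
  refine congr_arg (2 * ·) (Finset.sum_congr rfl fun v hv ↦ ?_)
  have hfiber : ({e ∈ {e ∈ orientedEdges s | e.2 - e.1 ∈ V} | e.2 - e.1 = v} : Finset (E × E)) =
      {e ∈ orientedEdges s | e.2 - e.1 = v} := by
    grind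
  rw [hfiber, Finset.sum_congr rfl fun e he ↦ by rw [(Finset.mem_filter.1 he).2],
    Finset.sum_const, card_filter_sub_eq_orientedEdges hV hs hv, nsmul_eq_mul]

theorem vertexIntegral_zonotope (hV : PairwiseNonParallel V)
    (hs : convexHull ℝ (s : Set E) = zonotope x V) (f : Dual ℝ E) :
    vertexIntegral (zonotope x V) f = ∑ v ∈ V, ((edgePatterns V v).ncard : ℝ) * |f v| := by
  rw [← hs, vertexIntegral_convexHull, sum_orientedEdges_abs_zonotope hV hs,
    mul_div_cancel_left₀ _ two_ne_zero]

end ZonotopeEdges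

/-! ### Edge patterns in dimension three -/

section SignPatterns

/-- The subsets of `R` cut out by the inequality `0 < a + b * r`, where `a + b * r` has no zero
in `R`. -/
def affinePatterns (R : Finset ℝ) : Set (Finset ℝ) :=
  {A | ∃ a b : ℝ, (∀ r ∈ R, a + b * r ≠ 0) ∧ A = {r ∈ R | 0 < a + b * r}}

variable {R : Finset ℝ}

theorem sdiff_mem_affinePatterns {A : Finset ℝ} (hA : A ∈ affinePatterns R) :
    R \ A ∈ affinePatterns R := by
  obtain ⟨a, b, hne, rfl⟩ := hA
  refine ⟨-a, -b, fun r hr h ↦ hne r hr (by linarith), ?_⟩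
  rw [← Finset.filter_not]
  refine Finset.filter_congr fun r hr ↦ ?_
  rw [not_lt, (hne r hr).le_iff_lt, ← neg_pos, neg_add, neg_mul]

theorem exists_lt_forall_lt_imp_lt (R : Finset ℝ) (r : ℝ) : ∃ c < r, ∀ q ∈ R, q < r → q < c := by
  have hev : ∀ᶠ c in 𝓝[<] r, ∀ q ∈ R, q < r → q < c :=
    (Finset.eventually_all R).2 fun q _ ↦ by
      by_cases hq : q < r
      · filter_upwards [Ioo_mem_nhdsLT hq] with c hc _ using hc.1
      · exact Eventually.of_forall fun c h ↦ absurd h hq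
  exact (eventually_mem_nhdsWithin.and hev).exists

theorem filter_le_mem_affinePatterns (R : Finset ℝ) (r : ℝ) :
    {q ∈ R | r ≤ q} ∈ affinePatterns R := by
  obtain ⟨c, hcr, hc⟩ := exists_lt_forall_lt_imp_lt R r
  have hsign {q : ℝ} (hq : q ∈ R) : q < c ∧ q < r ∨ c < q ∧ r ≤ q := by
    rcases lt_or_ge q r with h | h
    · exact Or.inl ⟨hc q hq h, h⟩
    · exact Or.inr ⟨hcr.trans_le h, h⟩
  refine ⟨-c, 1, fun q hq ↦ ?_, Finset.filter_congr fun q hq ↦ ?_⟩ <;>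
    rcases hsign hq with h | h <;> grind

theorem exists_eq_filter_le_of_max'_mem (hR : R.Nonempty) {A : Finset ℝ}
    (hA : A ∈ affinePatterns R) (hmax : R.max' hR ∈ A) : ∃ r ∈ R, A = {q ∈ R | r ≤ q} := by
  have hne : A.Nonempty := ⟨_, hmax⟩
  have hmin := A.min'_mem hne
  obtain ⟨a, b, -, hAab⟩ := hA
  have hmem {q : ℝ} : q ∈ A ↔ q ∈ R ∧ 0 < a + b * q := by rw [hAab, Finset.mem_filter]
  refine ⟨A.min' hne, (hmem.1 hmin).1, Finset.ext fun q ↦ ?_⟩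
  rw [Finset.mem_filter]
  refine ⟨fun hq ↦ ⟨(hmem.1 hq).1, A.min'_le q hq⟩, fun ⟨hq, _⟩ ↦ hmem.2 ⟨hq, ?_⟩⟩
  have := (hmem.1 hmin).2
  have := (hmem.1 hmax).2
  have := R.le_max' q hq
  rcases le_total 0 b with hb | hb <;> nlinarith

theorem affinePatterns_eq_union (hR : R.Nonempty) :
    affinePatterns R = (fun r ↦ {q ∈ R | r ≤ q}) '' R ∪ (fun r ↦ {q ∈ R | q < r}) '' R := by
  have hcompl (r : ℝ) : ({q ∈ R | q < r} : Finset ℝ) = R \ {q ∈ R | r ≤ q} := by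
    simp only [← Finset.filter_not, not_le]
  simp only [hcompl]
  apply Subset.antisymm
  · intro A hA
    by_cases hmax : R.max' hR ∈ A
    · obtain ⟨r, hr, rfl⟩ := exists_eq_filter_le_of_max'_mem hR hA hmax
      exact Or.inl ⟨r, hr, rfl⟩
    · obtain ⟨r, hr, h⟩ := exists_eq_filter_le_of_max'_mem hR (sdiff_mem_affinePatterns hA)
        (Finset.mem_sdiff.2 ⟨R.max'_mem hR, hmax⟩)
      obtain ⟨a, b, -, rfl⟩ := hA
      exact Or.inr ⟨r, hr, (congr_arg (R \ ·) h.symm).trans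
        (Finset.sdiff_sdiff_eq_self (Finset.filter_subset _ R))⟩
  · rintro _ (⟨r, -, rfl⟩ | ⟨r, -, rfl⟩)
    · exact filter_le_mem_affinePatterns R r
    · exact sdiff_mem_affinePatterns (filter_le_mem_affinePatterns R r)

theorem ncard_affinePatterns (hR : R.Nonempty) : (affinePatterns R).ncard = 2 * R.card := by
  have hupper : InjOn (fun r ↦ {q ∈ R | r ≤ q}) (R : Set ℝ) := fun r hr r' hr' h ↦ by
    have h₁ := Finset.ext_iff.1 h r
    have h₂ := Finset.ext_iff.1 h r'
    simp only [Finset.mem_filter] at h₁ h₂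
    grind
  have hlower : InjOn (fun r ↦ {q ∈ R | q < r}) (R : Set ℝ) := fun r hr r' hr' h ↦ by
    have h₁ := Finset.ext_iff.1 h r
    have h₂ := Finset.ext_iff.1 h r'
    simp only [Finset.mem_filter] at h₁ h₂
    grind
  have hdisj : Disjoint ((fun r ↦ {q ∈ R | r ≤ q}) '' (R : Set ℝ))
      ((fun r ↦ {q ∈ R | q < r}) '' R) := by
    refine disjoint_left.2 ?_
    rintro _ ⟨r, hr, rfl⟩ ⟨r', hr', h⟩
    have := (Finset.ext_iff.1 h (R.max' hR)).2
      (Finset.mem_filter.2 ⟨R.max'_mem hR, R.le_max' r hr⟩)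
    exact (Finset.mem_filter.1 this).2.not_ge (R.le_max' r' hr')
  rw [affinePatterns_eq_union hR,
    ncard_union_eq hdisj (R.finite_toSet.image _) (R.finite_toSet.image _),
    hupper.ncard_image, hlower.ncard_image, ncard_coe_finset, two_mul]

end SignPatterns

section TransverseFrame

variable {E : Type*} [AddCommGroup E] [Module ℝ E] {V : Finset E} {v v₀ : E} {e₁ e₂ : Dual ℝ E}

theorem exists_dual_vanishing_only_at (hV : PairwiseNonParallel V) (hv₀ : v₀ ∈ V) :
    ∃ f : Dual ℝ E, f v₀ = 0 ∧ ∀ v ∈ V, v ≠ v₀ → f v ≠ 0 := by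
  classical
  obtain ⟨g, hg⟩ := exists_dual_forall_apply_ne_zero (K := ℝ)
    (fun v : V.erase v₀ ↦ (ℝ ∙ v₀).mkQ v) fun ⟨v, hv⟩ h ↦ by
      obtain ⟨hne, hvV⟩ := Finset.mem_erase.1 hv
      obtain ⟨c, rfl⟩ := Submodule.mem_span_singleton.1 ((Submodule.Quotient.mk_eq_zero _).1 h)
      exact hne (hV.eq_of_smul hv₀ hvV rfl).symm
  refine ⟨g ∘ₗ (ℝ ∙ v₀).mkQ, ?_, fun v hv hne ↦ hg ⟨v, Finset.mem_erase.2 ⟨hne, hv⟩⟩⟩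
  rw [LinearMap.comp_apply, Submodule.mkQ_apply,
    (Submodule.Quotient.mk_eq_zero _).2 (Submodule.mem_span_singleton_self v₀), map_zero]

theorem mem_dualAnnihilator_span_singleton {f : Dual ℝ E} :
    f ∈ (ℝ ∙ v).dualAnnihilator ↔ f v = 0 := by
  rw [Submodule.mem_dualAnnihilator]
  refine ⟨fun h ↦ h v (Submodule.mem_span_singleton_self v), fun h w hw ↦ ?_⟩
  obtain ⟨c, rfl⟩ := Submodule.mem_span_singleton.1 hw
  rw [map_smul, h, smul_zero]

theorem finrank_dualAnnihilator_span_singleton [FiniteDimensional ℝ E] (hv : v ≠ 0) :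
    finrank ℝ (ℝ ∙ v).dualAnnihilator + 1 = finrank ℝ E := by
  rw [← Subspace.finrank_add_finrank_dualAnnihilator_eq (ℝ ∙ v), finrank_span_singleton hv,
    add_comm]

theorem finrank_span_pair {u : E} (h : LinearIndependent ℝ ![u, v]) :
    finrank ℝ (Submodule.span ℝ {u, v}) = 2 := by
  have := finrank_span_eq_card h
  rwa [Matrix.range_cons, Matrix.range_cons, Matrix.range_empty, union_empty, singleton_union,
    Fintype.card_fin] at this

/-- Two independent functionals vanishing at `v₀`, the first one at no other vector of `V`. In
dimension three they are coordinates on the quotient by the line of `v₀`, in which the other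
vectors of `V` have the finite slopes `e₂ v / e₁ v`. -/
structure IsTransverseFrame (V : Finset E) (v₀ : E) (e₁ e₂ : Dual ℝ E) : Prop where
  fst_apply : e₁ v₀ = 0
  snd_apply : e₂ v₀ = 0
  fst_apply_ne_zero : ∀ v ∈ V, v ≠ v₀ → e₁ v ≠ 0
  linearIndependent : LinearIndependent ℝ ![e₁, e₂]

theorem exists_isTransverseFrame [FiniteDimensional ℝ E] (hE : 2 < finrank ℝ E)
    (hV : PairwiseNonParallel V) (hV₂ : V.Nontrivial) (hv₀ : v₀ ∈ V) :
    ∃ e₁ e₂, IsTransverseFrame V v₀ e₁ e₂ := by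
  obtain ⟨e₁, h₁, hne₁⟩ := exists_dual_vanishing_only_at hV hv₀
  obtain ⟨v, hv, hne⟩ := hV₂.exists_ne v₀
  have he₁ : e₁ ≠ 0 := fun h ↦ hne₁ v hv hne (by rw [h, LinearMap.zero_apply])
  have hrank := finrank_dualAnnihilator_span_singleton (hV.1 v₀ hv₀)
  obtain ⟨⟨e₂, h₂⟩, hind⟩ := exists_linearIndependent_pair_of_one_lt_finrank (R := ℝ)
    (M := (ℝ ∙ v₀).dualAnnihilator) (x := ⟨e₁, mem_dualAnnihilator_span_singleton.2 h₁⟩)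
    (by lia) fun h ↦ he₁ (congr_arg Subtype.val h)
  exact ⟨e₁, e₂, h₁, mem_dualAnnihilator_span_singleton.1 h₂, hne₁, LinearIndependent.pair_iff.2
    fun a b h ↦ LinearIndependent.pair_iff.1 hind a b (Subtype.ext h)⟩

theorem IsTransverseFrame.exists_eq_add [FiniteDimensional ℝ E] (hE : finrank ℝ E = 3)
    (h : IsTransverseFrame V v₀ e₁ e₂) (hv₀ : v₀ ≠ 0) {f : Dual ℝ E} (hf : f v₀ = 0) :
    ∃ a b : ℝ, a • e₁ + b • e₂ = f := by
  rw [← Submodule.mem_span_pair]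
  have hle : Submodule.span ℝ {e₁, e₂} ≤ (ℝ ∙ v₀).dualAnnihilator :=
    Submodule.span_le.2 (pair_subset_iff.2 ⟨mem_dualAnnihilator_span_singleton.2 h.fst_apply,
      mem_dualAnnihilator_span_singleton.2 h.snd_apply⟩)
  have hrank := finrank_dualAnnihilator_span_singleton hv₀
  rw [Submodule.eq_of_le_of_finrank_eq hle (by rw [finrank_span_pair h.linearIndependent]; lia)]
  exact mem_dualAnnihilator_span_singleton.2 hf

open Classical in
/-- The slopes of the vectors of `V` other than `v₀` with respect to the frame `(e₁, e₂)`. -/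
def slopes (V : Finset E) (v₀ : E) (e₁ e₂ : Dual ℝ E) : Finset ℝ :=
  (V.erase v₀).image fun v ↦ e₂ v / e₁ v

theorem mem_slopes {r : ℝ} : r ∈ slopes V v₀ e₁ e₂ ↔ ∃ v ∈ V, v ≠ v₀ ∧ e₂ v / e₁ v = r := by
  classical
  simp only [slopes, Finset.mem_image, Finset.mem_erase]
  grind

theorem div_mem_slopes (hv : v ∈ V) (hne : v ≠ v₀) : e₂ v / e₁ v ∈ slopes V v₀ e₁ e₂ :=
  mem_slopes.2 ⟨v, hv, hne, rfl⟩

theorem IsTransverseFrame.apply_eq_mul (h : IsTransverseFrame V v₀ e₁ e₂) (a b : ℝ) (hv : v ∈ V)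
    (hne : v ≠ v₀) : (a • e₁ + b • e₂) v = e₁ v * (a + b * (e₂ v / e₁ v)) := by
  have := h.fst_apply_ne_zero v hv hne
  rw [LinearMap.add_apply, LinearMap.smul_apply, LinearMap.smul_apply, smul_eq_mul, smul_eq_mul]
  field_simp

open Classical in
/-- The vectors of `V` on the positive side of a plane through `v₀`, recovered from the set `A` of
the slopes at which the defining functional of the plane has the same sign as `e₁`. -/
def patternOfSlopes (V : Finset E) (v₀ : E) (e₁ e₂ : Dual ℝ E) (A : Finset ℝ) : Finset E :=
  {v ∈ V | v ≠ v₀ ∧ (0 < e₁ v ↔ e₂ v / e₁ v ∈ A)}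

theorem IsTransverseFrame.patternOfSlopes_filter (h : IsTransverseFrame V v₀ e₁ e₂) {a b : ℝ}
    (hab : ∀ r ∈ slopes V v₀ e₁ e₂, a + b * r ≠ 0) :
    patternOfSlopes V v₀ e₁ e₂ {r ∈ slopes V v₀ e₁ e₂ | 0 < a + b * r} =
      {v ∈ V | 0 < (a • e₁ + b • e₂) v} := by
  classical
  rw [patternOfSlopes]
  refine Finset.filter_congr fun v hv ↦ ?_
  obtain rfl | hne := eq_or_ne v v₀
  · simp [h.fst_apply, h.snd_apply]
  · have hr : e₂ v / e₁ v ∈ slopes V v₀ e₁ e₂ := div_mem_slopes hv hne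
    rw [h.apply_eq_mul a b hv hne, Finset.mem_filter, and_iff_right hr, and_iff_right hne]
    rcases (h.fst_apply_ne_zero v hv hne).lt_or_gt with he | he
    · rw [iff_false_left he.not_gt, ← neg_mul_neg (e₁ v), mul_pos_iff_of_pos_left (neg_pos.2 he),
        neg_pos, not_lt, (hab _ hr).le_iff_lt]
    · rw [iff_true_left he, mul_pos_iff_of_pos_left he]

theorem injOn_patternOfSlopes :
    InjOn (patternOfSlopes V v₀ e₁ e₂) {A | A ⊆ slopes V v₀ e₁ e₂} := by
  intro A hA A' hA' hAA'
  have hiff {r : ℝ} (hr : r ∈ slopes V v₀ e₁ e₂) : r ∈ A ↔ r ∈ A' := by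
    obtain ⟨v, hv, hne, rfl⟩ := mem_slopes.1 hr
    have := Finset.ext_iff.1 hAA' v
    simp only [patternOfSlopes, Finset.mem_filter] at this
    tauto
  exact Finset.ext fun r ↦ ⟨fun hr ↦ (hiff (hA hr)).1 hr, fun hr ↦ (hiff (hA' hr)).2 hr⟩

theorem IsTransverseFrame.edgePatterns_eq_image [FiniteDimensional ℝ E] (hE : finrank ℝ E = 3)
    (h : IsTransverseFrame V v₀ e₁ e₂) (hV : v₀ ∈ V) (hv₀ : v₀ ≠ 0) :
    edgePatterns V v₀ = patternOfSlopes V v₀ e₁ e₂ '' affinePatterns (slopes V v₀ e₁ e₂) := by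
  have hfilter (f : Dual ℝ E) : {v ∈ V | f v = 0} = ({v₀} : Finset E) ↔
      f v₀ = 0 ∧ ∀ v ∈ V, v ≠ v₀ → f v ≠ 0 := by
    simp only [Finset.eq_singleton_iff_unique_mem, Finset.mem_filter]
    exact ⟨fun ⟨⟨_, h₀⟩, h⟩ ↦ ⟨h₀, fun v hv hne hf ↦ hne (h v ⟨hv, hf⟩)⟩,
      fun ⟨h₀, h⟩ ↦ ⟨⟨hV, h₀⟩, fun v ⟨hv, hf⟩ ↦ by_contra fun hne ↦ h v hv hne hf⟩⟩
  have hne_iff (a b : ℝ) : (∀ v ∈ V, v ≠ v₀ → (a • e₁ + b • e₂) v ≠ 0) ↔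
      ∀ r ∈ slopes V v₀ e₁ e₂, a + b * r ≠ 0 := by
    constructor
    · intro hab r hr
      obtain ⟨v, hv, hne, rfl⟩ := mem_slopes.1 hr
      exact right_ne_zero_of_mul (h.apply_eq_mul a b hv hne ▸ hab v hv hne)
    · intro hab v hv hne
      rw [h.apply_eq_mul a b hv hne]
      exact mul_ne_zero (h.fst_apply_ne_zero v hv hne) (hab _ (div_mem_slopes hv hne))
  ext T
  constructor
  · rintro ⟨f, hf, rfl⟩
    obtain ⟨hf₀, hne⟩ := (hfilter f).1 hf
    obtain ⟨a, b, rfl⟩ := h.exists_eq_add hE hv₀ hf₀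
    have hab := (hne_iff a b).1 hne
    exact ⟨_, ⟨a, b, hab, rfl⟩, h.patternOfSlopes_filter hab⟩
  · rintro ⟨_, ⟨a, b, hab, rfl⟩, rfl⟩
    refine ⟨a • e₁ + b • e₂, (hfilter _).2 ⟨?_, (hne_iff a b).2 hab⟩, h.patternOfSlopes_filter hab⟩
    simp [h.fst_apply, h.snd_apply]

theorem IsTransverseFrame.ncard_edgePatterns [FiniteDimensional ℝ E] (hE : finrank ℝ E = 3)
    (h : IsTransverseFrame V v₀ e₁ e₂) (hV : PairwiseNonParallel V) (hV₂ : V.Nontrivial)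
    (hv₀ : v₀ ∈ V) : (edgePatterns V v₀).ncard = 2 * (slopes V v₀ e₁ e₂).card := by
  have hsub : affinePatterns (slopes V v₀ e₁ e₂) ⊆ {A | A ⊆ slopes V v₀ e₁ e₂} := by
    rintro _ ⟨a, b, -, rfl⟩
    exact Finset.filter_subset _ _
  obtain ⟨v, hv, hne⟩ := hV₂.exists_ne v₀
  rw [h.edgePatterns_eq_image hE hv₀ (hV.1 v₀ hv₀), (injOn_patternOfSlopes.mono hsub).ncard_image,
    ncard_affinePatterns ⟨_, div_mem_slopes hv hne⟩]

end TransverseFrame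

section Hypergraph

variable {V W : Finset (Fin 3 → ℝ)} {u v v₀ : Fin 3 → ℝ} {f e₁ e₂ : Dual ℝ (Fin 3 → ℝ)}

theorem finrank_ker_of_ne_zero (hf : f ≠ 0) : finrank ℝ (LinearMap.ker f) = 2 := by
  have := Module.Dual.finrank_ker_add_one_of_ne_zero hf
  rw [finrank_fin_fun] at this
  lia

theorem IsHEdge.exists_eq_filter (hW : IsHEdge V W) :
    ∃ f : Dual ℝ (Fin 3 → ℝ), f ≠ 0 ∧ W = {v ∈ V | f v = 0} := by
  obtain ⟨hWV, hrank, hmax⟩ := hW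
  have hlt : Submodule.span ℝ (W : Set (Fin 3 → ℝ)) < ⊤ :=
    lt_top_iff_ne_top.2 fun h ↦ by
      rw [h, finrank_top, finrank_fin_fun] at hrank
      lia
  obtain ⟨f, hf, hker⟩ := Submodule.exists_le_ker_of_lt_top _ hlt
  refine ⟨f, hf, Finset.Subset.antisymm (fun v hv ↦ Finset.mem_filter.2
    ⟨hWV hv, hker (Submodule.subset_span hv)⟩) fun v hv ↦ by_contra fun hvW ↦ ?_⟩
  obtain ⟨hvV, hfv⟩ := Finset.mem_filter.1 hv
  have hle : Submodule.span ℝ (insert v (W : Set (Fin 3 → ℝ))) ≤ LinearMap.ker f :=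
    Submodule.span_le.2 (insert_subset hfv (Submodule.span_le.1 hker))
  have := Submodule.finrank_mono hle
  rw [hmax v hvV hvW, finrank_ker_of_ne_zero hf] at this
  lia

theorem PairwiseNonParallel.isHEdge_filter (hV : PairwiseNonParallel V) (hf : f ≠ 0) (hu : u ∈ V)
    (hv : v ∈ V) (huv : u ≠ v) (hfu : f u = 0) (hfv : f v = 0) : IsHEdge V {v ∈ V | f v = 0} := by
  have hind : LinearIndependent ℝ ![u, v] :=
    (LinearIndependent.pair_iff' (hV.1 u hu)).2 fun c h ↦ huv (hV.eq_of_smul hu hv h.symm)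
  have hle : Submodule.span ℝ (({v ∈ V | f v = 0} : Finset _) : Set (Fin 3 → ℝ)) ≤
      LinearMap.ker f :=
    Submodule.span_le.2 fun w hw ↦ (Finset.mem_filter.1 hw).2
  have hrank : finrank ℝ (Submodule.span ℝ
      (({v ∈ V | f v = 0} : Finset _) : Set (Fin 3 → ℝ))) = 2 := by
    refine le_antisymm ((Submodule.finrank_mono hle).trans_eq (finrank_ker_of_ne_zero hf)) ?_
    rw [← finrank_span_pair hind]
    refine Submodule.finrank_mono (Submodule.span_mono (pair_subset_iff.2 ⟨?_, ?_⟩)) <;>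
      simp [*]
  refine ⟨Finset.filter_subset _ _, hrank, fun w hw hwW ↦ le_antisymm ?_ ?_⟩
  · exact (Submodule.finrank_le _).trans_eq (finrank_fin_fun ℝ)
  · rw [Nat.succ_le_iff, ← hrank]
    refine Submodule.finrank_lt_finrank_of_lt
      ((Submodule.span_mono (subset_insert _ _)).lt_of_ne fun h ↦ hwW ?_)
    exact Finset.mem_filter.2 ⟨hw, hle (h ▸ Submodule.subset_span (mem_insert _ _))⟩

theorem IsHEdge.nontrivial (hW : IsHEdge V W) : W.Nontrivial := by
  have hcard := finrank_span_finset_le_card (R := ℝ) W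
  rw [Set.finrank, hW.2.1] at hcard
  exact Finset.one_lt_card_iff_nontrivial.1 hcard

theorem IsTransverseFrame.setOf_isHEdge_eq_image (h : IsTransverseFrame V v₀ e₁ e₂)
    (hV : PairwiseNonParallel V) (hv₀ : v₀ ∈ V) :
    {W | IsHEdge V W ∧ v₀ ∈ W} =
      (fun r : ℝ ↦ {v ∈ V | e₂ v = r * e₁ v}) '' slopes V v₀ e₁ e₂ := by
  have happly (a b : ℝ) (v : Fin 3 → ℝ) : (a • e₁ + b • e₂) v = a * e₁ v + b * e₂ v := rfl
  ext W
  constructor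
  · rintro ⟨hW, hv₀W⟩
    obtain ⟨v, hv, hne⟩ := hW.nontrivial.exists_ne v₀
    obtain ⟨f, hf, rfl⟩ := hW.exists_eq_filter
    obtain ⟨a, b, rfl⟩ :=
      h.exists_eq_add (finrank_fin_fun ℝ) (hV.1 v₀ hv₀) (Finset.mem_filter.1 hv₀W).2
    obtain ⟨hvV, hfv⟩ := Finset.mem_filter.1 hv
    rw [h.apply_eq_mul a b hvV hne] at hfv
    have ha : a = -(b * (e₂ v / e₁ v)) :=
      eq_neg_of_add_eq_zero_left ((mul_eq_zero_iff_left (h.fst_apply_ne_zero v hvV hne)).1 hfv)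
    have hb : b ≠ 0 := by
      rintro rfl
      exact hf (by rw [ha, zero_mul, neg_zero, zero_smul, zero_smul, add_zero])
    refine ⟨_, div_mem_slopes hvV hne, Finset.filter_congr fun w _ ↦ ?_⟩
    rw [happly, ha, neg_mul, neg_add_eq_zero, mul_assoc, mul_right_inj' hb, eq_comm]
  · rintro ⟨r, hr, rfl⟩
    obtain ⟨v, hv, hne, rfl⟩ := mem_slopes.1 hr
    set r := e₂ v / e₁ v
    have hf : (-r) • e₁ + (1 : ℝ) • e₂ ≠ 0 := fun hf ↦
      one_ne_zero (LinearIndependent.pair_iff.1 h.linearIndependent _ _ hf).2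
    have hiff (w : Fin 3 → ℝ) : ((-r) • e₁ + (1 : ℝ) • e₂) w = 0 ↔ e₂ w = r * e₁ w := by
      rw [happly, one_mul, neg_mul, neg_add_eq_zero, eq_comm]
    have hedge := hV.isHEdge_filter hf hv₀ hv hne.symm
      ((hiff v₀).2 (by rw [h.fst_apply, h.snd_apply, mul_zero]))
      ((hiff v).2 (div_mul_cancel₀ _ (h.fst_apply_ne_zero v hv hne)).symm)
    simp only [hiff] at hedge
    exact ⟨hedge, Finset.mem_filter.2 ⟨hv₀, by rw [h.fst_apply, h.snd_apply, mul_zero]⟩⟩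

theorem IsTransverseFrame.degF_eq (h : IsTransverseFrame V v₀ e₁ e₂)
    (hV : PairwiseNonParallel V) (hv₀ : v₀ ∈ V) : degF V v₀ = (slopes V v₀ e₁ e₂).card := by
  have hinj : InjOn (fun r : ℝ ↦ {v ∈ V | e₂ v = r * e₁ v}) (slopes V v₀ e₁ e₂) := by
    intro r hr r' _ hrr'
    obtain ⟨v, hv, hne, rfl⟩ := mem_slopes.1 hr
    have he := h.fst_apply_ne_zero v hv hne
    have hmem := (Finset.ext_iff.1 hrr' v).1
      (Finset.mem_filter.2 ⟨hv, (div_mul_cancel₀ _ he).symm⟩)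
    rw [(Finset.mem_filter.1 hmem).2, mul_div_cancel_right₀ _ he]
  rw [degF, h.setOf_isHEdge_eq_image hV hv₀, hinj.ncard_image, ncard_coe_finset]

theorem ncard_edgePatterns (hV : PairwiseNonParallel V) (hV₂ : V.Nontrivial) (hv₀ : v₀ ∈ V) :
    (edgePatterns V v₀).ncard = 2 * degF V v₀ := by
  have hE : finrank ℝ (Fin 3 → ℝ) = 3 := finrank_fin_fun ℝ
  obtain ⟨e₁, e₂, h⟩ := exists_isTransverseFrame (by lia) hV hV₂ hv₀
  rw [h.ncard_edgePatterns hE hV hV₂ hv₀, h.degF_eq hV hv₀]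

end Hypergraph

/-! ### Polytopes with constant average -/

section SumAbs

variable {E : Type*} [AddCommGroup E] [Module ℝ E] {V : Finset E} {v₀ w : E}

open Classical in
protected theorem PairwiseNonParallel.insert (hV : PairwiseNonParallel V) (hw : w ≠ 0)
    (h : ∀ v ∈ V, ∀ c : ℝ, w ≠ c • v) : PairwiseNonParallel (insert w V) := by
  have h' : ∀ v ∈ V, ∀ c : ℝ, v ≠ c • w := by
    rintro _ hv c rfl
    have hc : c ≠ 0 := left_ne_zero_of_smul (hV.1 _ hv)
    exact h _ hv c⁻¹ (inv_smul_smul₀ hc w).symm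
  simp only [PairwiseNonParallel, Finset.forall_mem_insert]
  exact ⟨⟨hw, hV.1⟩, ⟨fun hne ↦ absurd rfl hne, fun v hv _ ↦ h' v hv⟩,
    fun u hu ↦ ⟨fun _ ↦ h u hu, hV.2 u hu⟩⟩

theorem PairwiseNonParallel.exists_sum_abs_eq_add (hV : PairwiseNonParallel V) (w : E) :
    ∃ W : Finset E, PairwiseNonParallel W ∧
      ∀ f : Dual ℝ E, ∑ v ∈ W, |f v| = |f w| + ∑ v ∈ V, |f v| := by
  classical
  obtain rfl | hw := eq_or_ne w 0
  · exact ⟨V, hV, fun f ↦ by rw [map_zero, abs_zero, zero_add]⟩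
  by_cases h : ∀ v ∈ V, ∀ c : ℝ, w ≠ c • v
  · refine ⟨insert w V, hV.insert hw h, fun f ↦ Finset.sum_insert fun hwV ↦ ?_⟩
    exact h w hwV 1 (one_smul ℝ w).symm
  · push Not at h
    obtain ⟨v, hv, c, rfl⟩ := h
    have hc : 0 < 1 + |c| := by positivity
    have hnot : ∀ u ∈ V.erase v, ∀ r : ℝ, (1 + |c|) • v ≠ r • u := by
      intro u hu r hru
      obtain ⟨huv, huV⟩ := Finset.mem_erase.1 hu
      refine huv (hV.eq_of_smul huV hv (c := (1 + |c|)⁻¹ * r) ?_)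
      rw [mul_smul, ← hru, inv_smul_smul₀ hc.ne']
    refine ⟨insert ((1 + |c|) • v) (V.erase v), (hV.mono (V.erase_subset v)).insert
      (smul_ne_zero hc.ne' (hV.1 v hv)) hnot, fun f ↦ ?_⟩
    rw [Finset.sum_insert fun hmem ↦ hnot _ hmem 1 (one_smul ℝ _).symm,
      ← Finset.add_sum_erase V _ hv]
    simp only [map_smul, smul_eq_mul, abs_mul, abs_of_pos hc]
    ring

theorem exists_pairwiseNonParallel_sum_abs_eq {ι : Type*} (I : Finset ι) (g : ι → E) :
    ∃ V : Finset E, PairwiseNonParallel V ∧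
      ∀ f : Dual ℝ E, ∑ v ∈ V, |f v| = ∑ i ∈ I, |f (g i)| := by
  classical
  induction I using Finset.induction_on with
  | empty => exact ⟨∅, by simp [PairwiseNonParallel], by simp⟩
  | insert i I hi ih =>
    obtain ⟨V, hV, hsum⟩ := ih
    obtain ⟨W, hW, hsum'⟩ := hV.exists_sum_abs_eq_add (g i)
    exact ⟨W, hW, fun f ↦ by rw [hsum', hsum, Finset.sum_insert hi]⟩

theorem abs_add_add_abs_sub_eq {a b : ℝ} (h : |b| ≤ |a|) : |a + b| + |a - b| = 2 * |a| := by
  rcases abs_cases a with ha | ha <;> rcases abs_le.1 h with ⟨h₁, h₂⟩ <;> grind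

theorem exists_pos_forall_mul_le {ι : Type*} (I : Finset ι) (a b : ι → ℝ)
    (hb : ∀ i ∈ I, 0 < b i) : ∃ ε > 0, ∀ i ∈ I, ε * a i ≤ b i := by
  have hev : ∀ᶠ ε in 𝓝[>] (0 : ℝ), ∀ i ∈ I, ε * a i ≤ b i :=
    (Finset.eventually_all I).2 fun i hi ↦ nhdsWithin_le_nhds <|
      ((continuous_mul_const (a i)).tendsto' 0 0 (zero_mul _)).eventually_le_const (hb i hi)
  exact (eventually_mem_nhdsWithin.and hev).exists

-- A second difference across the hyperplane `f = 0`, where `f` vanishes at `v₀` only, isolates the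
-- kink of `|f v₀|`.
theorem PairwiseNonParallel.eq_zero_of_sum_mul_abs_eq_zero (hV : PairwiseNonParallel V)
    {k : E → ℝ} (hk : ∀ f : Dual ℝ E, ∑ v ∈ V, k v * |f v| = 0) (hv₀ : v₀ ∈ V) : k v₀ = 0 := by
  classical
  obtain ⟨f, hf₀, hf⟩ := exists_dual_vanishing_only_at hV hv₀
  obtain ⟨g, hg⟩ := Projective.exists_dual_eq_one ℝ (hV.1 v₀ hv₀)
  obtain ⟨ε, hε, hle⟩ := exists_pos_forall_mul_le (V.erase v₀) (fun v ↦ |g v|) (fun v ↦ |f v|)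
    fun v hv ↦ abs_pos.2 (hf v (Finset.mem_of_mem_erase hv) (Finset.ne_of_mem_erase hv))
  have hzero : ∀ v ∈ V.erase v₀,
      k v * (|(f + ε • g) v| + |(f - ε • g) v| - 2 * |f v|) = 0 := fun v hv ↦ by
    rw [LinearMap.add_apply, LinearMap.sub_apply, LinearMap.smul_apply, smul_eq_mul,
      abs_add_add_abs_sub_eq (by rw [abs_mul, abs_of_pos hε]; exact hle v hv), sub_self, mul_zero]
  have hsum : ∑ v ∈ V, k v * (|(f + ε • g) v| + |(f - ε • g) v| - 2 * |f v|) = 0 := by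
    simp only [mul_sub, mul_add, mul_left_comm (k _) 2, Finset.sum_sub_distrib,
      Finset.sum_add_distrib, ← Finset.mul_sum, hk, mul_zero, add_zero, sub_zero]
  rw [← Finset.add_sum_erase V _ hv₀, Finset.sum_eq_zero hzero] at hsum
  simpa [hf₀, hg, hε.ne', abs_of_pos hε, ← two_mul] using hsum

end SumAbs

section ConstantAverage

variable {E : Type*} [NormedAddCommGroup E] [NormedSpace ℝ E] [FiniteDimensional ℝ E]
  {s V : Finset E} {c x : E} {lam : ℝ}

theorem pos_of_vertexIntegral_eq_mul_width [Nontrivial E]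
    (hint : (interior (convexHull ℝ (s : Set E))).Nonempty)
    (h : ∀ f, vertexIntegral (convexHull ℝ (s : Set E)) f =
      lam * width (convexHull ℝ (s : Set E)) f) : 0 < lam := by
  have hcpt := s.finite_toSet.isCompact_convexHull ℝ
  obtain ⟨f, hf⟩ := exists_ne (0 : Dual ℝ E)
  obtain ⟨p, hp, q, hq, hpq⟩ := exists_apply_lt_apply_of_interior_nonempty hint hf
  obtain ⟨e, he⟩ := orientedEdges_nonempty hp hq hpq
  obtain ⟨g, hg⟩ := Projective.exists_dual_eq_one ℝ (sub_ne_zero.2 (mem_orientedEdges.1 he).1.symm)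
  have hg₀ : g ≠ 0 := by
    rintro rfl
    exact zero_ne_one hg
  have hpos : 0 < (∑ e ∈ orientedEdges s, |g (e.2 - e.1)|) / 2 :=
    half_pos (Finset.sum_pos' (fun _ _ ↦ abs_nonneg _) ⟨e, he, by simp [hg]⟩)
  rw [← vertexIntegral_convexHull, h] at hpos
  exact pos_of_mul_pos_left hpos (width_pos hcpt hint hg₀).le

theorem exists_eq_zonotope_of_vertexIntegral_eq_mul_width [Nontrivial E]
    (hsymm : SymmAbout c (convexHull ℝ (s : Set E)))
    (hint : (interior (convexHull ℝ (s : Set E))).Nonempty)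
    (h : ∀ f, vertexIntegral (convexHull ℝ (s : Set E)) f =
      lam * width (convexHull ℝ (s : Set E)) f) :
    ∃ V x, PairwiseNonParallel V ∧ convexHull ℝ (s : Set E) = zonotope x V := by
  have hlam := pos_of_vertexIntegral_eq_mul_width hint h
  obtain ⟨V, hV, hsum⟩ := exists_pairwiseNonParallel_sum_abs_eq (orientedEdges s)
    fun e ↦ (2 * lam)⁻¹ • (e.2 - e.1)
  have hwidth (f : Dual ℝ E) : width (convexHull ℝ (s : Set E)) f = ∑ v ∈ V, |f v| := by
    have hf := h f
    rw [vertexIntegral_convexHull] at hf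
    simp only [hsum, map_smul, smul_eq_mul, abs_mul, abs_inv, ← Finset.mul_sum, abs_two,
      abs_of_pos hlam]
    field_simp
    linarith
  obtain ⟨x, hx⟩ := exists_eq_zonotope_of_width_eq hsymm (s.finite_toSet.isCompact_convexHull ℝ)
    (convex_convexHull ℝ _) (hint.mono interior_subset) hwidth
  exact ⟨V, x, hV, hx⟩

theorem vertexIntegral_zonotope_eq_mul_width_iff (hV : PairwiseNonParallel V)
    (hs : convexHull ℝ (s : Set E) = zonotope x V) :
    (∀ f, vertexIntegral (zonotope x V) f = lam * width (zonotope x V) f) ↔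
      ∀ v ∈ V, ((edgePatterns V v).ncard : ℝ) = lam := by
  simp only [vertexIntegral_zonotope hV hs, width_zonotope, Finset.mul_sum]
  refine ⟨fun h v hv ↦ sub_eq_zero.1 ?_, fun h f ↦ Finset.sum_congr rfl fun v hv ↦ by rw [h v hv]⟩
  refine hV.eq_zero_of_sum_mul_abs_eq_zero (k := fun v ↦ ((edgePatterns V v).ncard : ℝ) - lam)
    (fun f ↦ ?_) hv
  simp only [sub_mul, Finset.sum_sub_distrib, h f, sub_self]

theorem span_eq_top_of_interior_zonotope_nonempty (hint : (interior (zonotope x V)).Nonempty) :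
    Submodule.span ℝ (V : Set E) = ⊤ := by
  by_contra hspan
  obtain ⟨f, hf, hker⟩ := Submodule.exists_le_ker_of_lt_top _ (lt_top_iff_ne_top.2 hspan)
  have hpos := width_pos (isCompact_zonotope x V) hint hf
  rw [width_zonotope, Finset.sum_eq_zero fun v hv ↦
    abs_eq_zero.2 (hker (Submodule.subset_span hv))] at hpos
  exact hpos.false

end ConstantAverage

theorem forall_avgVert_eq_iff {d : ℕ} {P : Set (Fin d → ℝ)} (hP : IsCompact P)
    (hint : (interior P).Nonempty) {lam : ℝ} :
    (∀ z : Fin d → ℝ, z ≠ 0 → avgVert P z = lam) ↔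
      ∀ f, vertexIntegral P f = lam * width P f := by
  have havg (z : Fin d → ℝ) (hz : z ≠ 0) : avgVert P z = lam ↔
      vertexIntegral P (dotProductEquiv ℝ (Fin d) z) =
        lam * width P (dotProductEquiv ℝ (Fin d) z) := by
    have hpos := width_pos hP hint ((map_ne_zero_iff _ (dotProductEquiv ℝ (Fin d)).injective).2 hz)
    rw [mul_comm lam, ← inv_mul_eq_iff_eq_mul₀ hpos.ne']
    rfl
  have hzero : vertexIntegral P 0 = lam * width P 0 := by
    have himage : (0 : Dual ℝ (Fin d → ℝ)) '' P = {0} := (hint.mono interior_subset).image_const 0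
    rw [vertexIntegral, width, himage, csInf_singleton, csSup_singleton,
      intervalIntegral.integral_same, sub_self, mul_zero]
  refine ⟨fun h f ↦ ?_, fun h z hz ↦ (havg z hz).2 (h _)⟩
  obtain ⟨z, rfl⟩ := (dotProductEquiv ℝ (Fin d)).surjective f
  obtain rfl | hz := eq_or_ne z 0
  · rwa [map_zero]
  · exact (havg z hz).1 (h z hz)

theorem vertexIntegral_zonotope_eq_mul_width_iff_degF {s V : Finset (Fin 3 → ℝ)} {x : Fin 3 → ℝ}
    {lam : ℝ} (hV : PairwiseNonParallel V) (hspan : Submodule.span ℝ (V : Set (Fin 3 → ℝ)) = ⊤)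
    (hs : convexHull ℝ (s : Set (Fin 3 → ℝ)) = zonotope x V) :
    (∀ f, vertexIntegral (zonotope x V) f = lam * width (zonotope x V) f) ↔
      ∀ v ∈ V, 2 * (degF V v : ℝ) = lam := by
  have hV₂ : V.Nontrivial := by
    have hcard := finrank_span_finset_le_card (R := ℝ) V
    rw [Set.finrank, hspan, finrank_top, finrank_fin_fun] at hcard
    exact Finset.one_lt_card_iff_nontrivial.1 (by lia)
  rw [vertexIntegral_zonotope_eq_mul_width_iff hV hs]
  refine forall₂_congr fun v hv ↦ ?_
  rw [ncard_edgePatterns hV hV₂ hv, Nat.cast_mul, Nat.cast_two]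

/-- For a centrally symmetric convex polytope `P ⊂ ℝ³` with nonempty
interior, `A(P,z) = λ` for every nonzero `z` iff `P` is a zonotope whose generator set
`V` satisfies `2 · deg v = λ` for every `v ∈ V` in the hypergraph `ℱ`. -/
theorem centSymm_avgVert_const_iff (P : Set (Fin 3 → ℝ)) (hP : IsPolytope P)
    (hint : (interior P).Nonempty) (hsym : CentSymm P) (lam : ℝ) :
    (∀ z : Fin 3 → ℝ, z ≠ 0 → avgVert P z = lam) ↔
      ∃ (V : Finset (Fin 3 → ℝ)) (x : Fin 3 → ℝ),
        (∀ v ∈ V, v ≠ 0) ∧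
        (∀ u ∈ V, ∀ v ∈ V, u ≠ v → ∀ c : ℝ, v ≠ c • u) ∧
        Submodule.span ℝ (V : Set (Fin 3 → ℝ)) = ⊤ ∧
        P = {x} + ∑ v ∈ V, segment ℝ 0 v ∧
        ∀ v ∈ V, 2 * (degF V v : ℝ) = lam := by
  obtain ⟨s, rfl⟩ := hP
  obtain ⟨c, hc⟩ := hsym
  have hsymm : SymmAbout c (convexHull ℝ (s : Set (Fin 3 → ℝ))) :=
    fun p hp ↦ hc.subset (mem_image_of_mem _ hp)
  rw [forall_avgVert_eq_iff (s.finite_toSet.isCompact_convexHull ℝ) hint]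
  constructor
  · intro h
    obtain ⟨V, x, hV, hs⟩ := exists_eq_zonotope_of_vertexIntegral_eq_mul_width hsymm hint h
    rw [hs] at h hint
    have hspan := span_eq_top_of_interior_zonotope_nonempty hint
    exact ⟨V, x, hV.1, hV.2, hspan, hs,
      (vertexIntegral_zonotope_eq_mul_width_iff_degF hV hspan hs).1 h⟩
  · rintro ⟨V, x, hne, hind, hspan, hs, hdeg⟩
    rw [hs]
    exact (vertexIntegral_zonotope_eq_mul_width_iff_degF ⟨hne, hind⟩ hspan hs).2 hdeg
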